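/- Let (R, 𝔪) be a regular local ring containing a field. Let 𝔭, 𝔮 be prime ideals of R such that √(𝔭 + 𝔮) = 𝔪 and dim R/𝔭 + dim R/𝔮 = dim R. Then for all positive integers a and b, 𝔭^{(a)} ∩ 𝔮^{(b)} ⊆ 𝔪^{a+b}. -/

import Mathlib

/-- The `n`-th symbolic power of a prime ideal `P`:
`P^{(n)} = P^n R_P ∩ R`, the preimage in `R` of `P^n R_P` under the localization map. -/
noncomputable def symbolicPower {R : Type*} [CommRing R] (P : Ideal R) [P.IsPrime] (n : ℕ) :
    Ideal R :=
  (Ideal.map (algebraMap R (Localization.AtPrime P)) (P ^ n)).comap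
    (algebraMap R (Localization.AtPrime P))

/-- A (Noetherian) local ring is regular if its maximal ideal can be generated
by `dim R` elements. -/
def IsRegularLocal (R : Type*) [CommRing R] [IsLocalRing R] : Prop :=
  IsNoetherianRing R ∧
    ∃ s : Finset R, Ideal.span (s : Set R) = IsLocalRing.maximalIdeal R ∧
      (s.card : WithBot (WithTop ℕ)) = ringKrullDim R

/-!
Suppose `f ∉ 𝔪 ^ (a + b)` while `s * f ∈ 𝔭 ^ a` and `t * f ∈ 𝔮 ^ b` with `s ∉ 𝔭` and `t ∉ 𝔮`. As
`R` contains a field, its truncations are those of a polynomial ring: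
`R / 𝔪 ^ M ≅ k[X₁, …, Xₙ] / (X) ^ M` with `k` the residue field and `n = dim R`. Read in
`k[X₁, …, Xₙ]`, the Taylor coefficients of `f` of order less than `a` lie in `𝔭 + 𝔪 ^ N`, since
by Artin–Rees the factor `s` can be cancelled at the price of a bounded shift of the exponent;
similarly those of order less than `b` lie in `𝔮 + 𝔪 ^ N`.

Let `T = R/(𝔭 + 𝔪 ^ N) ⊗ₖ R/(𝔮 + 𝔪 ^ N)`, let `x` and `x + u` be the two images of the variables
in `T`, and consider the line `ξ(τ) = x + τ u` joining them. The polynomial `f(ξ(τ))` in `τ` is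
divisible by `τ ^ a` and by `(τ - 1) ^ b`, because the low-order Taylor coefficients of `f` vanish
at the two endpoints. A multiple of `τ ^ a * (τ - 1) ^ b` is determined by its coefficients of
degree at least `a + b`, and these lie in `(u) ^ (a + b)`. Hence the initial form of `f`, of
degree `r < a + b`, takes at `u` a value in `(u) ^ (r + 1) + (x) (u) ^ r`. Some power of `(x)`
lies in `(u)` because `𝔭 + 𝔮` is `𝔪`-primary, so a power of the initial form vanishes at `u` to
higher order than its degree. The monomials in `u` divisible by its leading monomial are thus
superfluous and `dim T = O(N ^ (n - 1))`. This contradicts the fact that `dim T` grows at least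
like `N ^ (dim R/𝔭 + dim R/𝔮) = N ^ n`.
-/

section SquareZero

open Polynomial in
lemma eval₂_eq_zero_of_map_eval₂_eq_zero {F A κ : Type*} [Field F] [CommRing A] [Field κ]
    {p : ℕ} [Fact p.Prime] [CharP κ p] (ψ : F →+* A) (φ : A →+* κ) {c : A} {d : F}
    (hcd : c ^ p = ψ d) (hc : ∀ b, φ (ψ b) ≠ φ c) {g : F[X]} (hg : φ (g.eval₂ ψ c) = 0) :
    g.eval₂ ψ c = 0 := by
  have h_irr : Irreducible (X ^ p - C d) := by
    refine X_pow_sub_C_irreducible_of_prime Fact.out fun b hb ↦ hc b (frobenius_inj κ p ?_)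
    simp only [frobenius_def, ← map_pow, hb, hcd]
  by_cases hdvd : X ^ p - C d ∣ g
  · obtain ⟨q, rfl⟩ := hdvd
    simp [eval₂_mul, hcd]
  · obtain ⟨u, v, huv⟩ := h_irr.coprime_iff_not_dvd.mpr hdvd
    simpa [hcd, hg] using congrArg (fun h ↦ φ (h.eval₂ ψ c)) huv

variable {A κ : Type*} [CommRing A] [Field κ] {p : ℕ} [hp : Fact p.Prime] [CharP A p]

lemma pow_char_eq_of_map_eq {φ : A →+* κ} (hker : RingHom.ker φ ^ 2 = ⊥) {x y : A}
    (hxy : φ x = φ y) : x ^ p = y ^ p := by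
  have hmem : x - y ∈ RingHom.ker φ := by simp [RingHom.mem_ker, hxy]
  have hzero : (x - y) ^ p = 0 := by
    rw [← Ideal.mem_bot, ← hker]
    exact Ideal.pow_le_pow_right hp.out.two_le (Ideal.pow_mem_pow hmem p)
  rwa [sub_pow_char, sub_eq_zero] at hzero

lemma isField_of_frobenius_range_le {φ : A →+* κ} (hφ : Function.Surjective φ)
    (hker : RingHom.ker φ ^ 2 = ⊥) {S : Subring A} (hS : (frobenius A p).range ≤ S)
    (hinj : Function.Injective (φ.comp S.subtype)) : IsField S := by
  refine ⟨⟨0, 1, fun h ↦ by simpa using congrArg (φ.comp S.subtype) h⟩, mul_comm, fun {s} hs ↦ ?_⟩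
  have hφs : φ s ≠ 0 := fun h ↦ hs (hinj (by simpa using h))
  obtain ⟨a, ha⟩ := hφ (φ s)⁻¹
  have hsa : (s * a : A) ^ p = 1 := by
    rw [pow_char_eq_of_map_eq hker (y := 1) (by simp [ha, hφs]), one_pow]
  refine ⟨⟨s ^ (p - 1) * a ^ p, S.mul_mem (S.pow_mem s.2 _) (hS ⟨a, rfl⟩)⟩, Subtype.ext ?_⟩
  rw [Subring.coe_mul, ← mul_assoc, ← pow_succ', Nat.sub_add_cancel hp.out.one_le, ← mul_pow, hsa,
    Subring.coe_one]

lemma exists_maximal_subring_injective {φ : A →+* κ} (hker : RingHom.ker φ ^ 2 = ⊥) :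
    ∃ S : Subring A, Maximal (fun S : Subring A ↦
      (frobenius A p).range ≤ S ∧ ∀ x ∈ S, φ x = 0 → x = 0) S := by
  have hrange : ∀ x ∈ (frobenius A p).range, φ x = 0 → x = 0 := by
    rintro _ ⟨a, rfl⟩ h
    rw [frobenius_def, map_pow, pow_eq_zero_iff hp.out.ne_zero] at h
    rw [frobenius_def, pow_char_eq_of_map_eq hker (h.trans φ.map_zero.symm),
      zero_pow hp.out.ne_zero]
  obtain ⟨S, -, hS⟩ := zorn_le_nonempty₀
    {S : Subring A | (frobenius A p).range ≤ S ∧ ∀ x ∈ S, φ x = 0 → x = 0}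
    (fun c hc hchain S hS ↦ ⟨sSup c, ⟨(hc hS).1.trans (le_sSup hS), fun x hx h ↦
      have ⟨_, hs, hxs⟩ := (Subring.mem_sSup_of_directedOn ⟨S, hS⟩ hchain.directedOn).1 hx
      (hc hs).2 x hxs h⟩, fun _ ↦ le_sSup⟩) (frobenius A p).range ⟨le_rfl, hrange⟩
  exact ⟨S, hS⟩

/-- A maximal subring containing all `p`-th powers on which `φ` is injective is a field mapping onto
`κ`: an element `c` with `φ c` outside its image could be adjoined to it, being a root of the
irreducible polynomial `X ^ p - c ^ p`. -/
lemma exists_rightInverse_of_ker_sq_eq_bot [CharP κ p] {φ : A →+* κ}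
    (hφ : Function.Surjective φ) (hker : RingHom.ker φ ^ 2 = ⊥) :
    ∃ σ : κ →+* A, φ.comp σ = RingHom.id κ := by
  obtain ⟨S, ⟨hfrob, hzero⟩, hmax⟩ := exists_maximal_subring_injective (p := p) hker
  have hinj : Function.Injective (φ.comp S.subtype) :=
    (injective_iff_map_eq_zero _).2 fun s hs ↦ Subtype.ext (hzero _ s.2 hs)
  have hsurj : Function.Surjective (φ.comp S.subtype) := fun y ↦ by
    obtain ⟨c, rfl⟩ := hφ y
    by_contra! hc
    let _ : Field S := (isField_of_frobenius_range_le hφ hker hfrob hinj).toField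
    have hle : S ≤ (Polynomial.eval₂RingHom S.subtype c).range := fun s hs ↦
      ⟨Polynomial.C ⟨s, hs⟩, by simp⟩
    refine hc ⟨c, hmax ⟨hfrob.trans hle, ?_⟩ hle ⟨Polynomial.X, by simp⟩⟩ rfl
    rintro _ ⟨g, rfl⟩ hg
    exact eval₂_eq_zero_of_map_eval₂_eq_zero (p := p) (d := ⟨c ^ p, hfrob ⟨c, rfl⟩⟩)
      S.subtype φ rfl hc hg
  let e := RingEquiv.ofBijective (φ.comp S.subtype) ⟨hinj, hsurj⟩
  exact ⟨S.subtype.comp e.symm.toRingHom, RingHom.ext e.apply_symm_apply⟩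

end SquareZero

theorem formallySmooth_of_perfectField_of_charP (k κ : Type*) [Field k] [PerfectField k]
    [Field κ] [Algebra k κ] (p : ℕ) [hp : Fact p.Prime] [CharP k p] :
    Algebra.FormallySmooth k κ := by
  have : CharP κ p := charP_of_injective_algebraMap (algebraMap k κ).injective p
  let φ : MvPolynomial κ k →ₐ[k] κ := MvPolynomial.aeval id
  have hφ : Function.Surjective φ.kerSquareLift.toRingHom := fun y ↦
    ⟨Ideal.Quotient.mk _ (MvPolynomial.X y), (φ.kerSquareLift_mk _).trans (by simp [φ])⟩
  have hker : RingHom.ker φ.kerSquareLift.toRingHom ^ 2 = ⊥ := by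
    rw [AlgHom.ker_kerSquareLift, Ideal.cotangentIdeal_square]
  have : Nontrivial (MvPolynomial κ k ⧸ RingHom.ker φ.toRingHom ^ 2) :=
    φ.kerSquareLift.toRingHom.domain_nontrivial
  have : CharP (MvPolynomial κ k ⧸ RingHom.ker φ.toRingHom ^ 2) p :=
    charP_of_injective_algebraMap (algebraMap k _).injective p
  obtain ⟨σ, hσ⟩ := exists_rightInverse_of_ker_sq_eq_bot (p := p) hφ hker
  refine Algebra.FormallySmooth.of_split φ { σ with commutes' := fun c ↦ ?_ }
    (AlgHom.ext (RingHom.congr_fun hσ))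
  obtain ⟨d, rfl⟩ := surjective_frobenius k p c
  have hd : φ.kerSquareLift.toRingHom (σ (algebraMap k κ d)) =
      φ.kerSquareLift.toRingHom (algebraMap k _ d) :=
    (RingHom.congr_fun hσ _).trans (φ.kerSquareLift.commutes d).symm
  change σ (algebraMap k κ (d ^ p)) = algebraMap k _ (d ^ p)
  simp only [map_pow, pow_char_eq_of_map_eq (p := p) hker hd]

theorem formallySmooth_of_perfectField (k κ : Type*) [Field k] [PerfectField k] [Field κ]
    [Algebra k κ] : Algebra.FormallySmooth k κ := by
  obtain ⟨p, _⟩ := CharP.exists k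
  rcases CharP.char_is_prime_or_zero k p with hp | rfl
  · have : Fact p.Prime := ⟨hp⟩
    exact formallySmooth_of_perfectField_of_charP k κ p
  · have : CharZero k := CharP.charP_to_charZero k
    have : CharZero κ := charZero_of_injective_algebraMap (algebraMap k κ).injective
    obtain ⟨s, hs⟩ := exists_isTranscendenceBasis k κ
    have := hs.isAlgebraic_field
    exact Algebra.FormallySmooth.of_algebraicIndependent_of_isSeparable hs.1

lemma exists_rightInverse_of_isNilpotent_ker {K A κ : Type*} [Field K] [CommRing A] [Algebra K A]
    [Field κ] {φ : A →+* κ} (hφ : Function.Surjective φ) (hker : IsNilpotent (RingHom.ker φ)) :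
    ∃ σ : κ →+* A, φ.comp σ = RingHom.id κ := by
  obtain ⟨k, _, _, ⟨ι⟩⟩ : ∃ (k : Type) (_ : Field k) (_ : PerfectField k), Nonempty (k →+* K) := by
    obtain ⟨p, _⟩ := CharP.exists K
    rcases CharP.char_is_prime_or_zero K p with hp | rfl
    · have : Fact p.Prime := ⟨hp⟩
      exact ⟨ZMod p, inferInstance, inferInstance, ⟨ZMod.castHom dvd_rfl K⟩⟩
    · have : CharZero K := CharP.charP_to_charZero K
      exact ⟨ℚ, inferInstance, inferInstance, ⟨algebraMap ℚ K⟩⟩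
  let _ : Algebra k A := ((algebraMap K A).comp ι).toAlgebra
  let _ : Algebra k κ := (φ.comp (algebraMap k A)).toAlgebra
  have := formallySmooth_of_perfectField k κ
  let φ' : A →ₐ[k] κ := { φ with commutes' := fun _ ↦ rfl }
  exact ⟨(Algebra.FormallySmooth.liftOfSurjective (AlgHom.id k κ) φ' hφ hker).toRingHom,
    RingHom.ext (Algebra.FormallySmooth.liftOfSurjective_apply (AlgHom.id k κ) φ' hφ hker)⟩

section Length

variable {A T : Type*} [CommRing A] [CommRing T] [Algebra A T]

variable (A) in
lemma length_quotient_anti {I J : Ideal T} (h : I ≤ J) :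
    Module.length A (T ⧸ J) ≤ Module.length A (T ⧸ I) :=
  Module.length_le_of_surjective (Ideal.Quotient.factorₐ A h).toLinearMap
    (Ideal.Quotient.factor_surjective h)

variable (A) in
lemma length_quotient_eq_colon_add (J : Ideal T) (v : T) :
    Module.length A (T ⧸ J) =
      Module.length A (T ⧸ J.colon {v}) + Module.length A (T ⧸ (J ⊔ Ideal.span {v})) := by
  let f : (T ⧸ J.colon {v}) →ₗ[T] T ⧸ J :=
    Submodule.mapQ (J.colon {v}) J (LinearMap.toSpanSingleton T T v) fun y hy ↦ by
      simpa using Submodule.mem_colon_singleton.1 hy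
  have hf : Function.Injective f := by
    rw [← LinearMap.ker_eq_bot, Submodule.ker_mapQ, eq_bot_iff, Submodule.map_le_iff_le_comap]
    intro y hy
    simpa using Submodule.mem_colon_singleton.2 hy
  have hle : J ≤ J ⊔ Ideal.span {v} := le_sup_left
  refine Module.length_eq_add_of_exact (f.restrictScalars A)
    (Ideal.Quotient.factorₐ A hle).toLinearMap hf (Ideal.Quotient.factor_surjective hle) fun y ↦ ?_
  obtain ⟨y, rfl⟩ := Ideal.Quotient.mk_surjective y
  have hmem : Ideal.Quotient.factorₐ A hle (Ideal.Quotient.mk J y) = 0 ↔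
      y ∈ J ⊔ Ideal.span {v} := Ideal.Quotient.eq_zero_iff_mem
  rw [AlgHom.toLinearMap_apply, hmem, Set.mem_range, (Ideal.Quotient.mk_surjective).exists]
  simp only [Submodule.mem_sup, Ideal.mem_span_singleton', exists_exists_eq_and]
  refine ⟨fun ⟨j, hj, r, hr⟩ ↦ ⟨r, ?_⟩, fun ⟨r, hr⟩ ↦ ⟨y - r * v, ?_, r, by ring⟩⟩
  · refine Ideal.Quotient.eq.2 ?_
    simpa [← hr] using hj
  · rw [← neg_mem_iff, neg_sub]
    exact Ideal.Quotient.eq.1 hr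

lemma length_quotient_le_card_mul_add {ι : Type*} (s : Finset ι) (v : ι → T) {I J U : Ideal T}
    (hI : I ≤ Ideal.span (v '' s) ⊔ J) (hU : ∀ w ∈ s, U ≤ J.colon {v w}) :
    Module.length A (T ⧸ J) ≤ s.card * Module.length A (T ⧸ U) + Module.length A (T ⧸ I) := by
  classical
  induction s using Finset.induction_on generalizing J with
  | empty => simpa using length_quotient_anti A (hI.trans (by simp))
  | insert w s hw ih =>
    have hI' : I ≤ Ideal.span (v '' s) ⊔ (J ⊔ Ideal.span {v w}) := by
      rw [Finset.coe_insert, Set.image_insert_eq, Ideal.span_insert] at hI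
      exact hI.trans (le_of_eq (by ac_rfl))
    have hs := ih hI' fun z hz ↦ (hU z (Finset.mem_insert_of_mem hz)).trans
      (Submodule.colon_mono le_sup_left subset_rfl)
    calc Module.length A (T ⧸ J)
        = Module.length A (T ⧸ J.colon {v w}) + Module.length A (T ⧸ (J ⊔ Ideal.span {v w})) :=
          length_quotient_eq_colon_add A J (v w)
      _ ≤ Module.length A (T ⧸ U) +
            (s.card * Module.length A (T ⧸ U) + Module.length A (T ⧸ I)) :=
          add_le_add (length_quotient_anti A (hU w (Finset.mem_insert_self w s))) hs
      _ = _ := by rw [Finset.card_insert_of_notMem hw]; push_cast; ring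

end Length

section StandardMonomials

open MvPolynomial

variable {σ A T : Type*} [CommRing A] [CommRing T] [Algebra A T]

variable (A) in
lemma length_quotient_pow_le_card_mul {ι : Type*} {U : Ideal T} (s : Finset ι) (v : ι → T)
    (deg : ι → ℕ) (hv : ∀ w, v w ∈ U ^ deg w) {L : ℕ}
    (hU : ∀ i < L, U ^ i ≤ Ideal.span (v '' {w | w ∈ s ∧ deg w = i}) ⊔ U ^ (i + 1)) :
    Module.length A (T ⧸ U ^ L) ≤ s.card * Module.length A (T ⧸ U) := by
  classical
  suffices h : ∀ i ≤ L, Module.length A (T ⧸ U ^ i) ≤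
      (s.filter fun w ↦ deg w < i).card * Module.length A (T ⧸ U) from
    (h L le_rfl).trans (by gcongr; exact Finset.filter_subset _ s)
  intro i
  induction i with
  | zero => intro _; rw [pow_zero, Ideal.one_eq_top]; simp
  | succ i ih =>
    intro hi
    have hcard : (s.filter fun w ↦ deg w < i + 1).card =
        (s.filter fun w ↦ deg w = i).card + (s.filter fun w ↦ deg w < i).card := by
      rw [← Finset.card_union_of_disjoint (Finset.disjoint_filter.2 fun w _ h ↦ by omega),
        ← Finset.filter_or]
      exact congrArg _ (Finset.filter_congr fun w _ ↦ by omega)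
    rw [hcard, Nat.cast_add, add_mul]
    refine (length_quotient_le_card_mul_add (s.filter fun w ↦ deg w = i) v
      (by simpa using hU i hi) fun w hw y hy ↦ Submodule.mem_colon_singleton.2 ?_).trans
      (by gcongr; exact ih (by omega))
    rw [← (Finset.mem_filter.1 hw).2, smul_eq_mul, pow_succ']
    exact Ideal.mul_mem_mul hy (hv w)

lemma span_range_pow (u : σ → T) (i : ℕ) :
    Ideal.span (Set.range u) ^ i =
      Ideal.span ((fun w : σ →₀ ℕ ↦ w.prod fun j e ↦ u j ^ e) '' {w | w.degree = i}) := by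
  have hmap : Ideal.span (Set.range u) = (idealOfVars σ T).map (eval u) := by
    rw [idealOfVars, Ideal.map_span, ← Set.range_comp]
    simp [Function.comp_def]
  rw [hmap, ← Ideal.map_pow, pow_idealOfVars_eq_span, Ideal.map_span, Set.image_image]
  simp only [eval_monomial, one_mul]
  rfl

lemma prod_pow_mem_span_range_pow (u : σ → T) (w : σ →₀ ℕ) :
    (w.prod fun j e ↦ u j ^ e) ∈ Ideal.span (Set.range u) ^ w.degree := by
  rw [span_range_pow]
  exact Ideal.subset_span ⟨w, rfl, rfl⟩

lemma aeval_mul_prod_pow (u : σ → T) (g : MvPolynomial σ A) (e : σ →₀ ℕ) :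
    aeval u g * (e.prod fun j r ↦ u j ^ r) =
      ∑ γ ∈ g.support, algebraMap A T (g.coeff γ) * ((γ + e).prod fun j r ↦ u j ^ r) := by
  classical
  rw [aeval_def, eval₂_eq, Finset.sum_mul]
  refine Finset.sum_congr rfl fun γ _ ↦ ?_
  rw [mul_assoc, Finsupp.prod_add_index' (fun _ ↦ pow_zero _) fun _ _ _ ↦ pow_add _ _ _]
  rfl

/-- Multiplying the relation `g(u) ∈ U ^ (D + 1)` by a monomial rewrites every multiple of `u ^ β`
in terms of smaller monomials of the same degree, modulo the next power of `U`. -/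
lemma span_range_pow_le_span_not_le_sup [Nontrivial A] (mo : MonomialOrder σ) (u : σ → T)
    {g : MvPolynomial σ A} {D : ℕ} (hg : g.IsHomogeneous D) {β : σ →₀ ℕ} (hβ : IsUnit (g.coeff β))
    (hlt : ∀ γ, mo.toSyn β < mo.toSyn γ →
      algebraMap A T (g.coeff γ) ∈ Ideal.span (Set.range u))
    (hgu : aeval u g ∈ Ideal.span (Set.range u) ^ (D + 1)) (i : ℕ) :
    Ideal.span (Set.range u) ^ i ≤ Ideal.span ((fun w : σ →₀ ℕ ↦ w.prod fun j r ↦ u j ^ r) ''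
      {w | ¬ β ≤ w ∧ w.degree = i}) ⊔ Ideal.span (Set.range u) ^ (i + 1) := by
  classical
  set U := Ideal.span (Set.range u)
  set P := Ideal.span ((fun w : σ →₀ ℕ ↦ w.prod fun j r ↦ u j ^ r) ''
      {w | ¬ β ≤ w ∧ w.degree = i}) ⊔ U ^ (i + 1)
  have hdeg {γ : σ →₀ ℕ} (hγ : g.coeff γ ≠ 0) : γ.degree = D :=
    not_imp_comm.1 hg.coeff_eq_zero hγ
  suffices h : ∀ w : σ →₀ ℕ, w.degree = i → (w.prod fun j r ↦ u j ^ r) ∈ P by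
    rw [span_range_pow, Ideal.span_le]
    rintro _ ⟨w, hw, rfl⟩
    exact h w hw
  intro w
  induction hs : mo.toSyn w using WellFoundedLT.induction generalizing w with
  | ind s ih =>
    intro hw
    by_cases hβw : β ≤ w
    swap
    · exact Ideal.mem_sup_left (Ideal.subset_span ⟨w, ⟨hβw, hw⟩, rfl⟩)
    obtain ⟨e, rfl⟩ := exists_add_of_le hβw
    rw [map_add, hdeg hβ.ne_zero] at hw
    have hsum : aeval u g * (e.prod fun j r ↦ u j ^ r) ∈ P := by
      refine Ideal.mem_sup_right ?_
      rw [← hw, add_right_comm, pow_add _ (D + 1)]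
      exact Ideal.mul_mem_mul hgu (prod_pow_mem_span_range_pow u e)
    rw [aeval_mul_prod_pow, ← Finset.add_sum_erase _ _ (mem_support_iff.2 hβ.ne_zero)] at hsum
    refine (P.unit_mul_mem_iff_mem (hβ.map (algebraMap A T))).1
      ((Ideal.add_mem_iff_left _ (P.sum_mem fun γ hγ ↦ ?_)).1 hsum)
    obtain ⟨hγβ, hγ⟩ := Finset.mem_erase.1 hγ
    have hγe : (γ + e).degree = i := by rw [map_add, hdeg (mem_support_iff.1 hγ), hw]
    rcases lt_or_gt_of_ne (mo.toSyn.injective.ne hγβ) with h | h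
    · refine P.mul_mem_left _ (ih _ ?_ _ rfl hγe)
      rw [← hs, map_add, map_add]
      exact add_lt_add_left h _
    · refine Ideal.mem_sup_right ?_
      rw [pow_succ', ← hγe]
      exact Ideal.mul_mem_mul (hlt γ h) (prod_pow_mem_span_range_pow u _)

lemma exists_finset_card_le_of_not_le [Finite σ] (β : σ →₀ ℕ) (L : ℕ) :
    ∃ s : Finset (σ →₀ ℕ), s.card ≤ Nat.card σ * (β.degree * L ^ (Nat.card σ - 1)) ∧
      ∀ w : σ →₀ ℕ, ¬ β ≤ w → w.degree < L → w ∈ s := by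
  classical
  have := Fintype.ofFinite σ
  refine ⟨Finset.univ.biUnion fun j ↦ Finset.univ.finsupp fun i ↦
    Finset.range (Function.update (fun _ ↦ L) j β.degree i),
    Finset.card_biUnion_le.trans (le_of_eq ?_), fun w hβw hw ↦ ?_⟩
  · simp [Finset.card_finsupp, Finset.prod_update_of_mem, ← Finset.erase_eq]
  · obtain ⟨j, hj⟩ : ∃ j, w j < β j := by simpa [Finsupp.le_def] using hβw
    simp only [Finset.mem_biUnion, Finset.mem_finsupp_iff, Finset.mem_univ, true_and,
      Finset.subset_univ, Finset.mem_range, forall_const]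
    refine ⟨j, fun i ↦ ?_⟩
    rw [Function.update_apply]
    split_ifs with hij
    · exact hij ▸ hj.trans_le (Finsupp.le_degree j β)
    · exact (Finsupp.le_degree i w).trans_lt hw

theorem length_quotient_span_range_pow_le [Finite σ] [Nontrivial A] (mo : MonomialOrder σ)
    (u : σ → T) {g : MvPolynomial σ A} {D : ℕ} (hg : g.IsHomogeneous D) {β : σ →₀ ℕ}
    (hβ : IsUnit (g.coeff β))
    (hlt : ∀ γ, mo.toSyn β < mo.toSyn γ →
      algebraMap A T (g.coeff γ) ∈ Ideal.span (Set.range u))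
    (hgu : aeval u g ∈ Ideal.span (Set.range u) ^ (D + 1)) (L : ℕ) :
    Module.length A (T ⧸ Ideal.span (Set.range u) ^ L) ≤
      (Nat.card σ * (D * L ^ (Nat.card σ - 1)) : ℕ) *
        Module.length A (T ⧸ Ideal.span (Set.range u)) := by
  obtain ⟨s, hs, hmem⟩ := exists_finset_card_le_of_not_le β L
  rw [not_imp_comm.1 hg.coeff_eq_zero hβ.ne_zero] at hs
  refine (length_quotient_pow_le_card_mul A s _ _ (prod_pow_mem_span_range_pow u)
    fun i hi ↦ ?_).trans (by gcongr)
  refine (span_range_pow_le_span_not_le_sup mo u hg hβ hlt hgu i).trans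
    (sup_le_sup_right (Ideal.span_mono (Set.image_mono fun w hw ↦ ?_)) _)
  exact ⟨hmem w hw.1 (hw.2.trans_lt hi), hw.2⟩

end StandardMonomials

section Growth

open IsLocalRing

variable {R : Type*} [CommRing R]

lemma exists_mem_pow_smul_top_of_smul_mem [IsNoetherianRing R] {M : Type*} [AddCommGroup M]
    [Module R M] [Module.Finite R M] (m : Ideal R) {x : R} (hx : IsSMulRegular M x) :
    ∃ c : ℕ, ∀ (N : ℕ) (y : M),
      x • y ∈ m ^ N • (⊤ : Submodule R M) → y ∈ m ^ (N - c) • (⊤ : Submodule R M) := by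
  obtain ⟨c, hc⟩ := Ideal.exists_pow_inf_eq_pow_smul m (LinearMap.range (LinearMap.lsmul R M x))
  refine ⟨c, fun N y hy ↦ ?_⟩
  rcases lt_or_ge N c with hN | hN
  · simp [Nat.sub_eq_zero_of_le hN.le]
  have hmem : LinearMap.lsmul R M x y ∈
      (m ^ (N - c) • (⊤ : Submodule R M)).map (LinearMap.lsmul R M x) := by
    rw [Submodule.map_smul'', Submodule.map_top]
    exact Submodule.smul_mono le_rfl inf_le_right ((hc N hN).le ⟨hy, y, rfl⟩)
  obtain ⟨z, hz, hzy⟩ := hmem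
  exact hx hzy ▸ hz

lemma mk_mem_smul_top_iff {I J : Ideal R} {y : R} :
    Ideal.Quotient.mk I y ∈ J • (⊤ : Submodule R (R ⧸ I)) ↔ y ∈ I ⊔ J := by
  rw [Ideal.smul_top_eq_map, Submodule.restrictScalars_mem, Ideal.Quotient.algebraMap_eq,
    Ideal.mem_quotient_iff_mem_sup, sup_comm]

lemma exists_mem_sup_pow_of_mul_mem [IsNoetherianRing R] (m : Ideal R) {I : Ideal R} {x : R}
    (hx : IsSMulRegular (R ⧸ I) x) :
    ∃ c : ℕ, ∀ (N : ℕ) (y : R), x * y ∈ I ⊔ m ^ N → y ∈ I ⊔ m ^ (N - c) := by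
  obtain ⟨c, hc⟩ := exists_mem_pow_smul_top_of_smul_mem m hx
  exact ⟨c, fun N y hy ↦ mk_mem_smul_top_iff.1 (hc N _ (mk_mem_smul_top_iff.2 hy))⟩

lemma isSMulRegular_quotient_of_notMem {P : Ideal R} [P.IsPrime] {x : R} (hx : x ∉ P) :
    IsSMulRegular (R ⧸ P) x :=
  (isSMulRegular_quotient_iff_mem_of_smul_mem P x).2 fun _ h ↦
    (‹P.IsPrime›.mem_or_mem h).resolve_left hx

/-- The colon ideal `(I + 𝔪 ^ N : x)` lies in `I + 𝔪 ^ (N - c)`, so passing from `I + (x)` to `I`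
adds to the length at `N` at least the length at `N - c`; summation raises the degree by one. -/
lemma choose_succ_le_length [IsLocalRing R] {P : Ideal R} {x : R} {c C d : ℕ}
    (hc : ∀ N y, x * y ∈ P ⊔ maximalIdeal R ^ N → y ∈ P ⊔ maximalIdeal R ^ (N - c))
    (hC : ∀ t : ℕ, (t.choose d : ℕ∞) ≤
      Module.length R (R ⧸ (P ⊔ Ideal.span {x} ⊔ maximalIdeal R ^ (C * t + 1)))) (t : ℕ) :
    (t.choose (d + 1) : ℕ∞) ≤
      Module.length R (R ⧸ (P ⊔ maximalIdeal R ^ ((c + C) * t + 1))) := by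
  induction t with
  | zero => simp
  | succ t ih =>
    rw [length_quotient_eq_colon_add R _ x, Nat.choose_succ_succ', add_comm, Nat.cast_add]
    refine add_le_add (ih.trans (length_quotient_anti R fun y hy ↦ ?_))
      (le_trans ?_ ((hC (t + 1)).trans (length_quotient_anti R ?_)))
    · have := hc _ y (by simpa [mul_comm] using Submodule.mem_colon_singleton.1 hy)
      refine sup_le_sup_left (Ideal.pow_le_pow_right ?_) P this
      rw [mul_add_one]
      omega
    · exact_mod_cast Nat.choose_le_choose d t.le_succ
    · rw [sup_right_comm]
      refine sup_le_sup_left (Ideal.pow_le_pow_right ?_) _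
      gcongr
      exact Nat.le_add_left C c

lemma exists_choose_le_length [IsNoetherianRing R] [IsLocalRing R] {d : ℕ} {I : Ideal R}
    {s : LTSeries (PrimeSpectrum R)} (hs : s.length = d) (hI : I ≤ s.head.asIdeal) :
    ∃ C : ℕ, ∀ t : ℕ, (t.choose d : ℕ∞) ≤
      Module.length R (R ⧸ (I ⊔ maximalIdeal R ^ (C * t + 1))) := by
  induction d generalizing I s with
  | zero =>
    refine ⟨0, fun t ↦ ?_⟩
    have hle : I ⊔ maximalIdeal R ^ (0 * t + 1) ≤ maximalIdeal R := by
      simpa using hI.trans (le_maximalIdeal s.head.isPrime.ne_top)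
    have : Nontrivial (R ⧸ (I ⊔ maximalIdeal R ^ (0 * t + 1))) :=
      Ideal.Quotient.nontrivial_iff.2 (ne_top_of_le_ne_top (maximalIdeal.isMaximal R).ne_top hle)
    simpa [Order.one_le_iff_pos] using Module.length_pos
  | succ d ih =>
    have hlt : s.head < s 1 := s.strictMono (by rw [Fin.lt_def]; simp [hs])
    obtain ⟨x, hx₁, hx₀⟩ := SetLike.exists_of_lt (show s.head.asIdeal < (s 1).asIdeal from hlt)
    obtain ⟨c, hc⟩ := exists_mem_sup_pow_of_mul_mem (maximalIdeal R)
      (isSMulRegular_quotient_of_notMem hx₀)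
    obtain ⟨C, hC⟩ := ih (I := s.head.asIdeal ⊔ Ideal.span {x}) (s := s.tail (by omega))
      (by simp [hs]) (by
        rw [RelSeries.head_tail]
        exact sup_le hlt.le ((Ideal.span_singleton_le_iff_mem _).2 hx₁))
    exact ⟨c + C, fun t ↦ (choose_succ_le_length hc hC t).trans
      (length_quotient_anti R (sup_le_sup_right hI _))⟩

theorem exists_pow_le_mul_length [IsNoetherianRing R] [IsLocalRing R] {I : Ideal R} {d : ℕ}
    (hd : d ≤ ringKrullDim (R ⧸ I)) :
    ∃ C : ℕ, ∀ t : ℕ, (t ^ d : ℕ) ≤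
      C * Module.length R (R ⧸ (I ⊔ maximalIdeal R ^ (C * t + C))) := by
  rw [ringKrullDim_quotient] at hd
  obtain ⟨s, hs⟩ := Order.le_krullDim_iff.1 hd
  obtain ⟨C, hC⟩ := exists_choose_le_length (s := s.map Subtype.val fun _ _ h ↦ h)
    hs s.head.2
  refine ⟨d.factorial + C * (d + 1) + 1, fun t ↦ ?_⟩
  have hpow : t ^ d ≤ d.factorial * (t + d).choose d := by
    rw [← Nat.descFactorial_eq_factorial_mul_choose]
    refine le_trans (Nat.pow_le_pow_left ?_ d) (Nat.pow_sub_le_descFactorial (t + d) d)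
    omega
  calc ((t ^ d : ℕ) : ℕ∞) ≤ d.factorial * (t + d).choose d := by exact_mod_cast hpow
    _ ≤ _ := mul_le_mul' (by norm_cast; omega)
      ((hC (t + d)).trans (length_quotient_anti R (sup_le_sup_left (Ideal.pow_le_pow_right ?_) _)))
  nlinarith [Nat.zero_le (d.factorial * t), Nat.zero_le (C * d * t)]

lemma exists_mul_pow_lt_pow (E A B n : ℕ) : ∃ t, E * (n * (A * t + B) ^ (n - 1)) < t ^ n := by
  obtain _ | n := n
  · exact ⟨0, by simp⟩
  refine ⟨E * (n + 1) * (A + B) ^ n + 1, ?_⟩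
  set t := E * (n + 1) * (A + B) ^ n + 1
  have hle : A * t + B ≤ (A + B) * t := by
    rw [add_mul]
    gcongr
    exact Nat.le_mul_of_pos_right B (by omega)
  calc E * ((n + 1) * (A * t + B) ^ n)
      ≤ E * ((n + 1) * ((A + B) * t) ^ n) := by gcongr
    _ = (E * (n + 1) * (A + B) ^ n) * t ^ n := by rw [mul_pow]; ring
    _ < t * t ^ n := by gcongr; omega
    _ = t ^ (n + 1) := (pow_succ' t n).symm

end Growth

section QuasiRegular

open MvPolynomial IsLocalRing

lemma length_quotient_maximalIdeal (R : Type*) [CommRing R] [IsLocalRing R] :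
    Module.length R (R ⧸ maximalIdeal R) = 1 :=
  Module.length_eq_one_iff.2
    (isSimpleModule_iff_isCoatom.2 (Ideal.isMaximal_def.1 (maximalIdeal.isMaximal R)))

/-- If the leading coefficient of a relation `g` were a unit modulo `𝔪`, the standard monomials
would bound the length of `R ⧸ 𝔪 ^ L` by a polynomial in `L` of degree less than `dim R`. -/
theorem coeff_mem_maximalIdeal_of_aeval_mem {R σ : Type*} [CommRing R] [IsLocalRing R]
    [IsNoetherianRing R] [Finite σ] {x : σ → R} (hx : Ideal.span (Set.range x) = maximalIdeal R)
    (hdim : Nat.card σ ≤ ringKrullDim R) {g : MvPolynomial σ R} {D : ℕ} (hg : g.IsHomogeneous D)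
    (hgx : aeval x g ∈ maximalIdeal R ^ (D + 1)) (γ : σ →₀ ℕ) : g.coeff γ ∈ maximalIdeal R := by
  by_contra hγ
  classical
  let := linearOrderOfSTO (α := σ) WellOrderingRel
  have : WellFoundedGT σ := Finite.to_wellFoundedGT
  let mo : MonomialOrder σ := MonomialOrder.lex
  have hres (δ : σ →₀ ℕ) : (g.map (residue R)).coeff δ = 0 ↔ g.coeff δ ∈ maximalIdeal R := by
    rw [coeff_map, residue_eq_zero_iff]
  have hβ : IsUnit (g.coeff (mo.degree (g.map (residue R)))) := by
    rw [← notMem_maximalIdeal, ← hres, ← ne_eq, mo.coeff_degree_ne_zero_iff]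
    exact fun h ↦ hγ ((hres γ).1 (by rw [h, coeff_zero]))
  have hlt (δ : σ →₀ ℕ) (hδ : mo.toSyn (mo.degree (g.map (residue R))) < mo.toSyn δ) :
      algebraMap R R (g.coeff δ) ∈ Ideal.span (Set.range x) := by
    rw [hx]
    exact (hres δ).1 (notMem_support_iff.1 fun h ↦ hδ.not_ge (mo.le_degree h))
  have hle (L : ℕ) : Module.length R (R ⧸ maximalIdeal R ^ L) ≤
      (Nat.card σ * (D * L ^ (Nat.card σ - 1)) : ℕ) := by
    have h := length_quotient_span_range_pow_le mo x hg hβ hlt (hx ▸ hgx) L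
    rwa [hx, length_quotient_maximalIdeal, mul_one] at h
  obtain ⟨C, hC⟩ := exists_pow_le_mul_length (I := (⊥ : Ideal R))
    (hdim.trans_eq (ringKrullDim_eq_of_ringEquiv (RingEquiv.quotientBot R).symm))
  obtain ⟨t, ht⟩ := exists_mul_pow_lt_pow (C * D) C C (Nat.card σ)
  have hpow := (hC t).trans
    (mul_le_mul_right ((length_quotient_anti R le_sup_right).trans (hle (C * t + C))) _)
  norm_cast at hpow
  refine ht.not_ge (hpow.trans_eq ?_)
  ring

end QuasiRegular

section Truncation

open MvPolynomial IsLocalRing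

lemma sup_pow_smul_top_eq_top {B M : Type*} [CommRing B] [AddCommGroup M] [Module B M]
    {N : Submodule B M} {J : Ideal B} (h : N ⊔ J • (⊤ : Submodule B M) = ⊤) (k : ℕ) :
    N ⊔ J ^ k • (⊤ : Submodule B M) = ⊤ := by
  induction k with
  | zero => simp
  | succ k ih =>
    refine top_le_iff.1 ?_
    calc ⊤ = N ⊔ J ^ k • (N ⊔ J • (⊤ : Submodule B M)) := by rw [h, ih]
      _ ≤ N ⊔ J ^ (k + 1) • (⊤ : Submodule B M) := by
        rw [Submodule.smul_sup, ← mul_smul, ← pow_succ, ← sup_assoc]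
        exact sup_le_sup_right (sup_le le_rfl Submodule.smul_le_right) _

lemma surjective_of_forall_exists_sub_mem {B A : Type*} [CommRing B] [CommRing A] {f : B →+* A}
    {J : Ideal B} (hJ : IsNilpotent (J.map f)) (h : ∀ a, ∃ b, a - f b ∈ J.map f) :
    Function.Surjective f := by
  algebraize [f]
  obtain ⟨k, hk⟩ := hJ
  have htop : LinearMap.range (Algebra.linearMap B A) ⊔ J • (⊤ : Submodule B A) = ⊤ := by
    refine eq_top_iff.2 fun a _ ↦ ?_
    obtain ⟨b, hb⟩ := h a
    refine Submodule.mem_sup.2 ⟨f b, ⟨b, rfl⟩, a - f b, ?_, add_sub_cancel _ _⟩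
    rwa [Ideal.smul_top_eq_map]
  have := sup_pow_smul_top_eq_top htop k
  rw [Ideal.smul_top_eq_map, Ideal.map_pow, RingHom.algebraMap_toAlgebra, hk, Ideal.zero_eq_bot,
    Submodule.restrictScalars_bot, sup_bot_eq] at this
  exact LinearMap.range_eq_top.1 this

lemma eval₂_sub_eval₂_mem {σ A B : Type*} [CommRing A] [CommRing B] {f g : A →+* B} {I : Ideal B}
    (hfg : ∀ a, f a - g a ∈ I) (u : σ → B) {H : MvPolynomial σ A} {r : ℕ} (hH : H.IsHomogeneous r) :
    eval₂ f u H - eval₂ g u H ∈ I * Ideal.span (Set.range u) ^ r := by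
  rw [eval₂_eq, eval₂_eq, ← Finset.sum_sub_distrib]
  refine Ideal.sum_mem _ fun w hw ↦ ?_
  rw [← sub_mul]
  have hdeg : w.degree = r := not_imp_comm.1 hH.coeff_eq_zero (mem_support_iff.1 hw)
  exact Ideal.mul_mem_mul (hfg _) (hdeg ▸ prod_pow_mem_span_range_pow u w)

lemma map_homogeneousComponent {σ A B : Type*} [CommSemiring A] [CommSemiring B] (f : A →+* B)
    (j : ℕ) (H : MvPolynomial σ A) :
    (homogeneousComponent j H).map f = homogeneousComponent j (H.map f) := by
  ext w
  simp only [coeff_map, coeff_homogeneousComponent]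
  split_ifs <;> simp

lemma sub_homogeneousComponent_mem {σ A : Type*} [CommRing A] {H : MvPolynomial σ A} {j : ℕ}
    (hH : H ∈ idealOfVars σ A ^ j) : H - homogeneousComponent j H ∈ idealOfVars σ A ^ (j + 1) := by
  refine (mem_pow_idealOfVars_iff' _ _).2 fun w hw ↦ ?_
  rw [coeff_sub, coeff_homogeneousComponent]
  split_ifs with h
  · exact sub_self _
  · rw [(mem_pow_idealOfVars_iff' _ _).1 hH w (by omega), sub_zero]

variable {R : Type*} [CommRing R] [IsLocalRing R]

lemma exists_ringHom_mk_sub_mem (K : Type*) [Field K] [Algebra K R] {M : ℕ} (hM : M ≠ 0) :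
    ∃ τ : ResidueField R →+* R ⧸ maximalIdeal R ^ M, ∀ r : R,
      Ideal.Quotient.mk _ r - τ (residue R r) ∈
        (maximalIdeal R).map (Ideal.Quotient.mk (maximalIdeal R ^ M)) := by
  have hle : ∀ y ∈ maximalIdeal R ^ M, residue R y = 0 := fun y hy ↦
    (residue_eq_zero_iff y).2 (Ideal.pow_le_self hM hy)
  have hker : RingHom.ker (Ideal.Quotient.lift _ (residue R) hle) =
      (maximalIdeal R).map (Ideal.Quotient.mk (maximalIdeal R ^ M)) :=
    (Ideal.ker_quotient_lift _ hle).trans (by rw [ker_residue])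
  obtain ⟨τ, hτ⟩ := exists_rightInverse_of_isNilpotent_ker (K := K)
    (Ideal.Quotient.lift_surjective_of_surjective _ hle residue_surjective)
    ⟨M, by rw [hker, ← Ideal.map_pow, Ideal.map_quotient_self]; rfl⟩
  refine ⟨τ, fun r ↦ ?_⟩
  rw [← hker, RingHom.mem_ker, map_sub, Ideal.Quotient.lift_mk, sub_eq_zero]
  exact (RingHom.congr_fun hτ _).symm

variable {σ : Type*} {x : σ → R} {M : ℕ}

lemma span_range_mk_eq_map_maximalIdeal (hx : Ideal.span (Set.range x) = maximalIdeal R) :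
    Ideal.span (Set.range fun i ↦ Ideal.Quotient.mk (maximalIdeal R ^ M) (x i)) =
      (maximalIdeal R).map (Ideal.Quotient.mk (maximalIdeal R ^ M)) := by
  have h := congrArg (Ideal.map (Ideal.Quotient.mk (maximalIdeal R ^ M))) hx
  rwa [Ideal.map_span, ← Set.range_comp] at h

lemma map_idealOfVars_eq_map_maximalIdeal (hx : Ideal.span (Set.range x) = maximalIdeal R)
    (τ : ResidueField R →+* R ⧸ maximalIdeal R ^ M) :
    (idealOfVars σ (ResidueField R)).map (eval₂Hom τ fun i ↦ Ideal.Quotient.mk _ (x i)) =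
      (maximalIdeal R).map (Ideal.Quotient.mk (maximalIdeal R ^ M)) := by
  rw [← span_range_mk_eq_map_maximalIdeal hx, idealOfVars, Ideal.map_span, ← Set.range_comp]
  simp [Function.comp_def]

lemma eval₂Hom_surjective (hx : Ideal.span (Set.range x) = maximalIdeal R)
    {τ : ResidueField R →+* R ⧸ maximalIdeal R ^ M}
    (hτ : ∀ r : R, Ideal.Quotient.mk _ r - τ (residue R r) ∈
      (maximalIdeal R).map (Ideal.Quotient.mk (maximalIdeal R ^ M))) :
    Function.Surjective (eval₂Hom τ fun i ↦ Ideal.Quotient.mk _ (x i)) := by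
  refine surjective_of_forall_exists_sub_mem (J := idealOfVars σ (ResidueField R)) ⟨M, ?_⟩
    fun a ↦ ?_
  · rw [map_idealOfVars_eq_map_maximalIdeal hx, ← Ideal.map_pow, Ideal.map_quotient_self]
    rfl
  · obtain ⟨r, rfl⟩ := Ideal.Quotient.mk_surjective a
    refine ⟨C (residue R r), ?_⟩
    rw [map_idealOfVars_eq_map_maximalIdeal hx, coe_eval₂Hom, eval₂_C]
    exact hτ r

lemma homogeneousComponent_eq_zero_of_eval₂_eq_zero [IsNoetherianRing R] [Finite σ]
    (hx : Ideal.span (Set.range x) = maximalIdeal R) (hdim : Nat.card σ ≤ ringKrullDim R)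
    {τ : ResidueField R →+* R ⧸ maximalIdeal R ^ M}
    (hτ : ∀ r : R, Ideal.Quotient.mk _ r - τ (residue R r) ∈
      (maximalIdeal R).map (Ideal.Quotient.mk (maximalIdeal R ^ M)))
    {G : MvPolynomial σ (ResidueField R)}
    (hG : eval₂Hom τ (fun i ↦ Ideal.Quotient.mk _ (x i)) G = 0) {j : ℕ} (hj : j < M)
    (hGj : G ∈ idealOfVars σ (ResidueField R) ^ j) : homogeneousComponent j G = 0 := by
  set u := fun i ↦ Ideal.Quotient.mk (maximalIdeal R ^ M) (x i)
  set n := (maximalIdeal R).map (Ideal.Quotient.mk (maximalIdeal R ^ M))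
  obtain ⟨H, rfl⟩ := map_surjective (residue R) residue_surjective G
  rw [← map_homogeneousComponent]
  set g := homogeneousComponent j H
  have hlow : eval₂ τ u (g.map (residue R)) ∈ n ^ (j + 1) := by
    have h := Ideal.mem_map_of_mem (eval₂Hom τ u) (sub_homogeneousComponent_mem hGj)
    rw [Ideal.map_pow, map_idealOfVars_eq_map_maximalIdeal hx, map_sub, hG, zero_sub,
      neg_mem_iff, ← map_homogeneousComponent] at h
    exact h
  have hdiff : eval₂ (Ideal.Quotient.mk _) u g - eval₂ (τ.comp (residue R)) u g ∈
      n ^ (j + 1) := by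
    have hu : Ideal.span (Set.range u) = n := span_range_mk_eq_map_maximalIdeal hx
    rw [pow_succ', ← hu]
    exact eval₂_sub_eval₂_mem (hu ▸ hτ) u (homogeneousComponent_isHomogeneous j H)
  have hgx : aeval x g ∈ maximalIdeal R ^ (j + 1) := by
    rw [← Ideal.mem_quotient_iff_mem (Ideal.pow_le_pow_right hj), map_aeval, Ideal.map_pow]
    rw [← eval₂_map] at hdiff
    simpa using add_mem hdiff hlow
  ext w
  rw [coeff_map, coeff_zero, residue_eq_zero_iff]
  exact coeff_mem_maximalIdeal_of_aeval_mem hx hdim (homogeneousComponent_isHomogeneous j H) hgx w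

theorem exists_surjective_ker_le_pow_idealOfVars (K : Type*) [Field K] [Algebra K R]
    [IsNoetherianRing R] [Finite σ] (hx : Ideal.span (Set.range x) = maximalIdeal R)
    (hdim : Nat.card σ ≤ ringKrullDim R) (hM : M ≠ 0) :
    ∃ Φ : MvPolynomial σ (ResidueField R) →+* R ⧸ maximalIdeal R ^ M, Function.Surjective Φ ∧
      RingHom.ker Φ ≤ idealOfVars σ (ResidueField R) ^ M ∧
      (idealOfVars σ (ResidueField R)).map Φ =
        (maximalIdeal R).map (Ideal.Quotient.mk (maximalIdeal R ^ M)) := by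
  obtain ⟨τ, hτ⟩ := exists_ringHom_mk_sub_mem (R := R) K hM
  refine ⟨_, eval₂Hom_surjective hx hτ, fun G hG ↦ ?_, map_idealOfVars_eq_map_maximalIdeal hx τ⟩
  suffices h : ∀ j ≤ M, G ∈ idealOfVars σ (ResidueField R) ^ j from h M le_rfl
  intro j hj
  induction j with
  | zero => simp
  | succ j ih =>
    have hG₀ := homogeneousComponent_eq_zero_of_eval₂_eq_zero hx hdim hτ hG hj (ih (by omega))
    simpa only [hG₀, sub_zero] using sub_homogeneousComponent_mem (ih (by omega))

end Truncation

section DifferentialPower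

open MvPolynomial IsLocalRing

variable {σ A : Type*} [CommRing A]

/-- The Taylor expansion `f(x + y)`, as a polynomial in `y` whose coefficients are polynomials
in `x`: these coefficients are the Hasse derivatives of `f`. -/
noncomputable def taylor : MvPolynomial σ A →ₐ[A] MvPolynomial σ (MvPolynomial σ A) :=
  aeval fun i ↦ C (X i) + X i

/-- The `a`-th differential power of an ideal `J` of a polynomial ring, consisting of the
polynomials all of whose Hasse derivatives of order less than `a` lie in `J`. -/
noncomputable def differentialPower (J : Ideal (MvPolynomial σ A)) (a : ℕ) :
    Ideal (MvPolynomial σ A) :=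
  (J.map C ⊔ idealOfVars σ (MvPolynomial σ A) ^ a).comap taylor

lemma constantCoeff_taylor (f : MvPolynomial σ A) : constantCoeff (taylor f) = f := by
  have : (constantCoeff.comp (taylor (σ := σ) (A := A)).toRingHom) = RingHom.id _ :=
    ringHom_ext (fun c ↦ by simp [taylor, MvPolynomial.algebraMap_apply])
      (fun i ↦ by simp [taylor])
  exact RingHom.congr_fun this f

lemma map_constantCoeff_taylor (f : MvPolynomial σ A) : (taylor f).map constantCoeff = f := by
  have : ((MvPolynomial.map constantCoeff).comp (taylor (σ := σ) (A := A)).toRingHom) =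
      RingHom.id _ :=
    ringHom_ext (fun c ↦ by simp [taylor, MvPolynomial.algebraMap_apply])
      (fun i ↦ by simp [taylor])
  exact RingHom.congr_fun this f

lemma sub_C_constantCoeff_mem_idealOfVars (H : MvPolynomial σ A) :
    H - C (constantCoeff H) ∈ idealOfVars σ A := by
  rw [← pow_one (idealOfVars σ A), mem_pow_idealOfVars_iff']
  intro w hw
  obtain rfl : w = 0 := by rwa [Nat.lt_one_iff, Finsupp.degree_eq_zero_iff] at hw
  simp [constantCoeff_eq]

lemma mem_differentialPower_iff {J : Ideal (MvPolynomial σ A)} {a : ℕ} {f : MvPolynomial σ A} :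
    f ∈ differentialPower J a ↔ ∀ w : σ →₀ ℕ, w.degree < a → (taylor f).coeff w ∈ J := by
  classical
  refine ⟨fun hf w hw ↦ ?_, fun hf ↦ ?_⟩
  · obtain ⟨G, hG, H, hH, hGH⟩ := Submodule.mem_sup.1 hf
    rw [← hGH, coeff_add, (mem_pow_idealOfVars_iff' _ _).1 hH w hw, add_zero]
    exact mem_map_C_iff.1 hG w
  · change taylor f ∈ J.map C ⊔ idealOfVars σ (MvPolynomial σ A) ^ a
    rw [(taylor f).as_sum]
    refine Ideal.sum_mem _ fun w _ ↦ ?_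
    rcases lt_or_ge w.degree a with hw | hw
    · refine Ideal.mem_sup_left (mem_map_C_iff.2 fun v ↦ ?_)
      rw [coeff_monomial]
      split_ifs with h
      · exact hf w hw
      · exact J.zero_mem
    · refine Ideal.mem_sup_right ((mem_pow_idealOfVars_iff' _ _).2 fun v hv ↦ ?_)
      rw [coeff_monomial, if_neg (by rintro rfl; omega)]

lemma differentialPower_mono {I J : Ideal (MvPolynomial σ A)} (h : I ≤ J) (a : ℕ) :
    differentialPower I a ≤ differentialPower J a :=
  Ideal.comap_mono (sup_le_sup_right (Ideal.map_mono h) _)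

lemma map_taylor_le (J : Ideal (MvPolynomial σ A)) :
    J.map taylor ≤ J.map C ⊔ idealOfVars σ (MvPolynomial σ A) := by
  refine Ideal.map_le_iff_le_comap.2 fun f hf ↦ Ideal.mem_comap.2 ?_
  rw [← add_sub_cancel (C f) (taylor f)]
  refine Submodule.add_mem_sup (Ideal.mem_map_of_mem _ hf) ?_
  conv => enter [2, 2, 2]; rw [← constantCoeff_taylor f]
  exact sub_C_constantCoeff_mem_idealOfVars _

lemma sup_pow_le_sup_pow (I J : Ideal A) (a : ℕ) : (I ⊔ J) ^ a ≤ I ⊔ J ^ a := by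
  induction a with
  | zero => simp
  | succ a ih =>
    calc (I ⊔ J) ^ (a + 1) ≤ (I ⊔ J ^ a) * (I ⊔ J) := pow_succ (I ⊔ J) a ▸ Ideal.mul_mono_left ih
      _ ≤ I ⊔ J ^ (a + 1) := by
        rw [Ideal.sup_mul, Ideal.mul_sup (J ^ a), ← pow_succ]
        exact sup_le (le_sup_of_le_left Ideal.mul_le_left)
          (sup_le_sup_right Ideal.mul_le_right _)

lemma pow_le_differentialPower (J : Ideal (MvPolynomial σ A)) (a : ℕ) :
    J ^ a ≤ differentialPower J a := by
  refine Ideal.map_le_iff_le_comap.1 ?_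
  rw [Ideal.map_pow]
  exact (Ideal.pow_right_mono (map_taylor_le J) a).trans (sup_pow_le_sup_pow _ _ a)

lemma pow_add_le_differentialPower (J : Ideal (MvPolynomial σ A)) (e a : ℕ) :
    J ^ (e + a) ≤ differentialPower (J ^ e) a := by
  refine Ideal.map_le_iff_le_comap.1 ?_
  rw [Ideal.map_pow, Ideal.map_pow]
  exact (Ideal.pow_right_mono (map_taylor_le J) _).trans Ideal.sup_pow_add_le_pow_sup_pow

/-- A form of the Leibniz rule: in lowest order, the Hasse derivative of `s * f` is `s` times that
of `f`, so that each order costs one division by `s`. -/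
lemma mem_differentialPower_of_mul_mem {J : ℕ → Ideal (MvPolynomial σ A)} (hJ : Monotone J)
    {a : ℕ} {s f : MvPolynomial σ A} (hcolon : ∀ j < a, ∀ y, s * y ∈ J j → y ∈ J (j + 1))
    (hsf : s * f ∈ differentialPower (J 0) a) : f ∈ differentialPower (J a) a := by
  classical
  suffices ∀ j ≤ a, f ∈ differentialPower (J j) j from this a le_rfl
  intro j
  induction j with
  | zero => simp [mem_differentialPower_iff]
  | succ j ih =>
    intro hj
    have ih := mem_differentialPower_iff.1 (ih (by omega))
    refine mem_differentialPower_iff.2 fun w hw ↦ ?_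
    rcases Nat.lt_or_ge w.degree j with h | h
    · exact hJ j.le_succ (ih w h)
    apply hcolon j hj
    have hsum := mem_differentialPower_iff.1 hsf w (by omega)
    rw [map_mul, coeff_mul, ← Finset.add_sum_erase _ _ (a := (0, w)) (by simp)] at hsum
    have hrest : ∑ y ∈ (Finset.HasAntidiagonal.antidiagonal w).erase (0, w),
        coeff y.1 (taylor s) * coeff y.2 (taylor f) ∈ J j := by
      refine sum_mem fun y hy ↦ Ideal.mul_mem_left _ _ (ih _ ?_)
      rw [Finset.mem_erase, Finset.HasAntidiagonal.mem_antidiagonal] at hy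
      have hadd : y.1.degree + y.2.degree = w.degree := by rw [← map_add, hy.2]
      have hne : y.1.degree ≠ 0 := fun h0 ↦ by
        rw [Finsupp.degree_eq_zero_iff] at h0
        exact hy.1 (Prod.ext h0 (by rw [← hy.2, h0, zero_add]))
      omega
    have hlead := (Submodule.add_mem_iff_left _ hrest).1 (hJ j.zero_le hsum)
    rwa [← constantCoeff_eq, constantCoeff_taylor] at hlead

lemma comap_pow_of_surjective {B D : Type*} [CommRing B] [CommRing D] {f : B →+* D}
    (hf : Function.Surjective f) (I : Ideal D) (a : ℕ) :
    (I ^ a).comap f = I.comap f ^ a ⊔ RingHom.ker f := by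
  rw [← Ideal.comap_map_of_surjective' _ hf, Ideal.map_pow, Ideal.map_comap_of_surjective _ hf]

lemma mem_differentialPower_comap {R : Type*} [CommRing R] {m I : Ideal R} {M : ℕ}
    {Φ : MvPolynomial σ A →+* R ⧸ m ^ M} (hsurj : Function.Surjective Φ)
    (hker : RingHom.ker Φ ≤ idealOfVars σ A ^ M)
    (hmap : (idealOfVars σ A).map Φ = m.map (Ideal.Quotient.mk (m ^ M)))
    {s f : R} {c : ℕ} (hc : ∀ N y, s * y ∈ I ⊔ m ^ N → y ∈ I ⊔ m ^ (N - c))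
    {a N : ℕ} (hN : N + a * c + a ≤ M) (hsf : s * f ∈ I ^ a) {F : MvPolynomial σ A}
    (hF : Φ F = Ideal.Quotient.mk (m ^ M) f) :
    F ∈ differentialPower (((I ⊔ m ^ N).map (Ideal.Quotient.mk (m ^ M))).comap Φ) a := by
  let π := Ideal.Quotient.mk (m ^ M)
  let J : ℕ → Ideal (MvPolynomial σ A) := fun j ↦ ((I ⊔ m ^ (M - a - j * c)).map π).comap Φ
  obtain ⟨S, hS⟩ := hsurj (π s)
  have hJ : Monotone J := fun i j hij ↦ Ideal.comap_mono <| Ideal.map_mono <|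
    sup_le_sup_left (Ideal.pow_le_pow_right (Nat.sub_le_sub_left (Nat.mul_le_mul_right c hij) _)) _
  have hcolon : ∀ j < a, ∀ y, S * y ∈ J j → y ∈ J (j + 1) := fun j _ y hy ↦ by
    obtain ⟨z, hz⟩ := Ideal.Quotient.mk_surjective (Φ y)
    have hle (e : ℕ) : m ^ M ≤ I ⊔ m ^ (M - e) :=
      le_sup_of_le_right (Ideal.pow_le_pow_right (M.sub_le e))
    simp only [J, Ideal.mem_comap, map_mul, hS, ← hz, π, Nat.sub_sub] at hy ⊢
    rw [← map_mul, Ideal.mem_quotient_iff_mem (hle _)] at hy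
    rw [Ideal.mem_quotient_iff_mem (hle _), add_mul, one_mul, ← add_assoc, ← Nat.sub_sub]
    exact hc _ _ hy
  have hSF : S * F ∈ ((I.map π).comap Φ) ^ a ⊔ RingHom.ker Φ := by
    rw [← comap_pow_of_surjective hsurj, Ideal.mem_comap, map_mul, hS, hF, ← map_mul,
      ← Ideal.map_pow]
    exact Ideal.mem_map_of_mem _ hsf
  have hvars : idealOfVars σ A ^ (M - a) ≤ J 0 := Ideal.map_le_iff_le_comap.1 <| by
    rw [Ideal.map_pow, hmap, ← Ideal.map_pow, zero_mul, Nat.sub_zero]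
    exact Ideal.map_mono le_sup_right
  have hSF₀ : S * F ∈ differentialPower (J 0) a := by
    refine (sup_le ?_ ?_ : _ ≤ differentialPower (J 0) a) hSF
    · exact (pow_le_differentialPower _ a).trans
        (differentialPower_mono (Ideal.comap_mono (Ideal.map_mono le_sup_left)) a)
    · refine hker.trans ((Ideal.pow_le_pow_right (show M - a + a ≤ M by omega)).trans ?_)
      exact (pow_add_le_differentialPower _ _ a).trans (differentialPower_mono hvars a)
  refine differentialPower_mono (Ideal.comap_mono (Ideal.map_mono (sup_le_sup_left
    (Ideal.pow_le_pow_right ?_) _))) a (mem_differentialPower_of_mul_mem hJ hcolon hSF₀)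
  omega

end DifferentialPower

section Diagonal

open MvPolynomial

lemma eval₂_mem_span_range_pow {σ A B : Type*} [CommRing A] [CommRing B] (f : A →+* B) (u : σ → B)
    {H : MvPolynomial σ A} {r : ℕ} (hH : H.IsHomogeneous r) :
    eval₂ f u H ∈ Ideal.span (Set.range u) ^ r := by
  rw [eval₂_eq]
  refine Ideal.sum_mem _ fun w hw ↦ Ideal.mul_mem_left _ _ ?_
  have hdeg : w.degree = r := not_imp_comm.1 hH.coeff_eq_zero (mem_support_iff.1 hw)
  exact hdeg ▸ prod_pow_mem_span_range_pow u w

lemma coeff_eval₂_X_mul_C {σ A B : Type*} [CommRing A] [CommRing B] (f : A →+* B) (u : σ → B)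
    (H : MvPolynomial σ A) (r : ℕ) :
    (eval₂ (Polynomial.C.comp f) (fun i ↦ Polynomial.X * Polynomial.C (u i)) H).coeff r =
      eval₂ f u (homogeneousComponent r H) := by
  classical
  induction H using MvPolynomial.induction_on' with
  | add p q hp hq => rw [eval₂_add, Polynomial.coeff_add, hp, hq, map_add, eval₂_add]
  | monomial w c =>
    have hprod : (w.prod fun i e ↦ (Polynomial.X * Polynomial.C (u i)) ^ e) =
        Polynomial.C (w.prod fun i e ↦ u i ^ e) * Polynomial.X ^ w.degree := by
      simp only [Finsupp.prod, mul_pow, Finset.prod_mul_distrib, Finset.prod_pow_eq_pow_sum,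
        map_prod, map_pow, mul_comm, Finsupp.degree_apply]
    rw [homogeneousComponent_of_mem (isHomogeneous_monomial c rfl), eval₂_monomial, hprod,
      RingHom.comp_apply, ← mul_assoc, ← map_mul, Polynomial.coeff_C_mul_X_pow]
    split_ifs <;> simp [eval₂_monomial]

lemma coeff_mem_of_monic_dvd {T : Type*} [CommRing T] {P F : Polynomial T} (hP : P.Monic)
    (hPF : P ∣ F) {I : Ideal T} (hF : ∀ j ≥ P.natDegree, F.coeff j ∈ I) (r : ℕ) :
    F.coeff r ∈ I := by
  let π := Ideal.Quotient.mk I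
  suffices F.map π = 0 by
    rw [← Ideal.Quotient.eq_zero_iff_mem, ← Polynomial.coeff_map, this, Polynomial.coeff_zero]
  by_contra hne
  have : Nontrivial (T ⧸ I) := Polynomial.nontrivial_iff.1 ⟨_, _, hne⟩
  refine (hP.map π).not_dvd_of_degree_lt hne ?_ (Polynomial.map_dvd π hPF)
  rw [Polynomial.degree_eq_natDegree (hP.map π).ne_zero, hP.natDegree_map,
    Polynomial.degree_lt_iff_coeff_zero]
  intro j hj
  rw [Polynomial.coeff_map, Ideal.Quotient.eq_zero_iff_mem]
  exact hF j hj

variable {σ k T : Type*} [CommRing k] [CommRing T] [Algebra k T]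

lemma aeval_add_eq_eval₂_taylor (i : MvPolynomial σ k →ₐ[k] T) (v : σ → T) (f : MvPolynomial σ k) :
    aeval (fun j ↦ i (X j) + v j) f = eval₂ (i : MvPolynomial σ k →+* T) v (taylor f) := by
  have : (aeval fun j ↦ i (X j) + v j : MvPolynomial σ k →ₐ[k] T).toRingHom =
      (eval₂Hom (i : MvPolynomial σ k →+* T) v).comp taylor.toRingHom :=
    ringHom_ext (fun c ↦ by simp [taylor, MvPolynomial.algebraMap_apply])
      (fun j ↦ by simp [taylor])
  exact RingHom.congr_fun this f

lemma pow_dvd_aeval_add {i : MvPolynomial σ k →ₐ[k] T} {J : Ideal (MvPolynomial σ k)}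
    (hJ : J ≤ RingHom.ker i) {a : ℕ} {f : MvPolynomial σ k} (hf : f ∈ differentialPower J a)
    {ξ : T} {v : σ → T} (hv : ∀ j, ξ ∣ v j) : ξ ^ a ∣ aeval (fun j ↦ i (X j) + v j) f := by
  rw [aeval_add_eq_eval₂_taylor, ← Ideal.mem_span_singleton, ← Ideal.span_singleton_pow]
  refine (sup_le ?_ ?_ : _ ≤ (Ideal.span {ξ} ^ a).comap (eval₂Hom (i : _ →+* T) v)) hf
  · refine Ideal.map_le_iff_le_comap.2 fun g hg ↦ ?_
    rw [Ideal.mem_comap, Ideal.mem_comap, eval₂Hom_C, RingHom.coe_coe, hJ hg]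
    exact zero_mem _
  · refine (Ideal.pow_right_mono ?_ a).trans (Ideal.le_comap_pow _ a)
    rw [Ideal.span_le]
    rintro _ ⟨j, rfl⟩
    simpa [Ideal.mem_span_singleton] using hv j

variable {i₁ i₂ : MvPolynomial σ k →ₐ[k] T} {u : σ → T} (hu : ∀ j, i₁ (X j) + u j = i₂ (X j))
include hu

lemma sub_mem_span_range (g : MvPolynomial σ k) : i₂ g - i₁ g ∈ Ideal.span (Set.range u) := by
  have : (Ideal.Quotient.mkₐ k (Ideal.span (Set.range u))).comp i₂ =
      (Ideal.Quotient.mkₐ k (Ideal.span (Set.range u))).comp i₁ := by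
    refine algHom_ext fun j ↦ Ideal.Quotient.eq.2 ?_
    rw [RingHom.coe_coe, RingHom.coe_coe, ← hu, add_sub_cancel_left]
    exact Ideal.subset_span ⟨j, rfl⟩
  exact Ideal.Quotient.eq.1 (DFunLike.congr_fun this g)

/-- The polynomial `f(x₁ + τ u)` in `τ` is divisible by `τ ^ a` and, as `x₁ + u = x₂`, also by
`(τ - 1) ^ b`. -/
lemma eval₂_homogeneousComponent_taylor_mem {f : MvPolynomial σ k} {a b : ℕ}
    (h₁ : f ∈ differentialPower (RingHom.ker i₁) a)
    (h₂ : f ∈ differentialPower (RingHom.ker i₂) b) (r : ℕ) :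
    eval₂ (i₁ : MvPolynomial σ k →+* T) u (homogeneousComponent r (taylor f)) ∈
      Ideal.span (Set.range u) ^ (a + b) := by
  nontriviality T
  let F : Polynomial T :=
    aeval (fun j ↦ Polynomial.CAlgHom.comp i₁ (X j) + Polynomial.X * Polynomial.C (u j)) f
  have hcoeff (j : ℕ) : F.coeff j =
      eval₂ (i₁ : MvPolynomial σ k →+* T) u (homogeneousComponent j (taylor f)) := by
    rw [← coeff_eval₂_X_mul_C]
    exact congrArg (Polynomial.coeff · j)
      (aeval_add_eq_eval₂_taylor (Polynomial.CAlgHom.comp i₁) _ f)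
  have hker (i : MvPolynomial σ k →ₐ[k] T) :
      RingHom.ker i ≤ RingHom.ker ((Polynomial.CAlgHom (R := k)).comp i) := fun g hg ↦ by
    simp [RingHom.mem_ker, RingHom.mem_ker.1 hg]
  have hF₁ : Polynomial.X ^ a ∣ F := pow_dvd_aeval_add (hker i₁) h₁ fun j ↦ dvd_mul_right _ _
  have hF₂ : (Polynomial.X - 1) ^ b ∣ F := by
    have hF : F = aeval (fun j ↦ Polynomial.CAlgHom.comp i₂ (X j) +
        (Polynomial.X - 1) * Polynomial.C (u j)) f := by
      refine congrArg (aeval · f) (funext fun j ↦ ?_)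
      simp only [AlgHom.comp_apply, Polynomial.CAlgHom_apply, ← hu j, map_add]
      ring
    exact hF ▸ pow_dvd_aeval_add (hker i₂) h₂ fun j ↦ dvd_mul_right _ _
  have hcop : IsCoprime (Polynomial.X ^ a : Polynomial T) ((Polynomial.X - 1) ^ b) :=
    IsCoprime.pow ⟨1, -1, by ring⟩
  have hmonic : (Polynomial.X - 1 : Polynomial T).Monic := Polynomial.monic_X_sub_C 1
  have hdeg : (Polynomial.X - 1 : Polynomial T).natDegree = 1 := Polynomial.natDegree_X_sub_C 1
  rw [← hcoeff]
  refine coeff_mem_of_monic_dvd ((Polynomial.monic_X_pow a).mul (hmonic.pow b))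
    (hcop.mul_dvd hF₁ hF₂) (fun j hj ↦ ?_) r
  rw [(Polynomial.monic_X_pow a).natDegree_mul (hmonic.pow b), Polynomial.natDegree_X_pow,
    hmonic.natDegree_pow, hdeg, mul_one] at hj
  rw [hcoeff]
  exact Ideal.pow_le_pow_right hj
    (eval₂_mem_span_range_pow _ u (homogeneousComponent_isHomogeneous j _))

lemma aeval_homogeneousComponent_mem {f : MvPolynomial σ k} {a b : ℕ}
    (h₁ : f ∈ differentialPower (RingHom.ker i₁) a)
    (h₂ : f ∈ differentialPower (RingHom.ker i₂) b) (r : ℕ) :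
    aeval u (homogeneousComponent r f) ∈
      (idealOfVars σ k).map i₁ * Ideal.span (Set.range u) ^ r ⊔
        Ideal.span (Set.range u) ^ (a + b) := by
  have hconst : aeval u (homogeneousComponent r f) =
      eval₂ ((algebraMap k T).comp constantCoeff) u (homogeneousComponent r (taylor f)) := by
    rw [aeval_def, ← eval₂_map, map_homogeneousComponent, map_constantCoeff_taylor]
  have hsub (g : MvPolynomial σ k) : (algebraMap k T).comp constantCoeff g -
      (i₁ : MvPolynomial σ k →+* T) g ∈ (idealOfVars σ k).map i₁ := by
    have := Ideal.mem_map_of_mem i₁ (neg_mem (sub_C_constantCoeff_mem_idealOfVars g))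
    simpa [← algebraMap_eq] using this
  rw [hconst, ← sub_add_cancel (eval₂ _ u _)]
  exact Submodule.add_mem_sup
    (eval₂_sub_eval₂_mem hsub u (homogeneousComponent_isHomogeneous r _))
    (eval₂_homogeneousComponent_taylor_mem hu h₁ h₂ r)

end Diagonal

section LengthBound

open MvPolynomial

variable {σ k T : Type*} [Field k] [CommRing T] [Algebra k T]
  {i₁ i₂ : MvPolynomial σ k →ₐ[k] T} {u : σ → T}

lemma surjective_mk_comp (hu : ∀ j, i₁ (X j) + u j = i₂ (X j)) (hT : i₁.range ⊔ i₂.range = ⊤) :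
    Function.Surjective ((Ideal.Quotient.mkₐ k (Ideal.span (Set.range u))).comp i₁) := by
  let π := Ideal.Quotient.mkₐ k (Ideal.span (Set.range u))
  have hπ : π.comp i₂ = π.comp i₁ :=
    AlgHom.ext fun g ↦ Ideal.Quotient.eq.2 (sub_mem_span_range hu g)
  rw [← AlgHom.range_eq_top, ← top_le_iff,
    ← (AlgHom.range_eq_top π).2 (Ideal.Quotient.mkₐ_surjective k _), ← Algebra.map_top, ← hT,
    Algebra.map_sup, ← AlgHom.range_comp, ← AlgHom.range_comp, hπ, sup_idem]

lemma length_quotient_le_of_surjective {J : Ideal (MvPolynomial σ k)} {B : Type*} [CommRing B]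
    [Algebra k B] {f : MvPolynomial σ k →ₐ[k] B} (hf : Function.Surjective f)
    (hJ : J ≤ RingHom.ker f) :
    Module.length k B ≤ Module.length k (MvPolynomial σ k ⧸ J) :=
  have hf₀ : ∀ g ∈ J, f g = 0 := hJ
  Module.length_le_of_surjective (Ideal.Quotient.liftₐ J f hf₀).toLinearMap
    (Ideal.Quotient.lift_surjective_of_surjective J hf₀ hf)

lemma map_pow_idealOfVars_le (hu : ∀ j, i₁ (X j) + u j = i₂ (X j)) {ℓ : ℕ}
    (hℓ : idealOfVars σ k ^ ℓ ≤ RingHom.ker i₁ ⊔ RingHom.ker i₂) :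
    (idealOfVars σ k).map i₁ ^ ℓ ≤ Ideal.span (Set.range u) := by
  rw [← Ideal.map_pow, Ideal.map_le_iff_le_comap]
  refine hℓ.trans (sup_le (fun g hg ↦ ?_) fun g hg ↦ ?_)
  · rw [Ideal.mem_comap, RingHom.mem_ker.1 hg]
    exact zero_mem _
  · have := sub_mem_span_range hu g
    rwa [RingHom.mem_ker.1 hg, zero_sub, neg_mem_iff] at this

lemma span_range_pow_two_mul_eq_bot (hu : ∀ j, i₁ (X j) + u j = i₂ (X j)) {N : ℕ}
    (h₁ : idealOfVars σ k ^ N ≤ RingHom.ker i₁) (h₂ : idealOfVars σ k ^ N ≤ RingHom.ker i₂) :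
    Ideal.span (Set.range u) ^ (2 * N) = ⊥ := by
  have hle : Ideal.span (Set.range u) ≤ (idealOfVars σ k).map i₁ ⊔ (idealOfVars σ k).map i₂ := by
    rw [Ideal.span_le]
    rintro _ ⟨j, rfl⟩
    have hX : X j ∈ idealOfVars σ k := Ideal.subset_span ⟨j, rfl⟩
    rw [SetLike.mem_coe, eq_sub_of_add_eq' (hu j)]
    exact sub_mem (Ideal.mem_sup_right (Ideal.mem_map_of_mem _ hX))
      (Ideal.mem_sup_left (Ideal.mem_map_of_mem _ hX))
  have hbot {i : MvPolynomial σ k →ₐ[k] T} (h : idealOfVars σ k ^ N ≤ RingHom.ker i) :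
      (idealOfVars σ k).map i ^ N = ⊥ := by
    rwa [← Ideal.map_pow, ← Ideal.map_eq_bot_iff_le_ker] at *
  rw [two_mul, eq_bot_iff]
  refine (Ideal.pow_right_mono hle _).trans (Ideal.sup_pow_add_le_pow_sup_pow.trans ?_)
  rw [hbot h₁, hbot h₂, sup_bot_eq]

lemma aeval_homogeneousComponent_pow_mem (hu : ∀ j, i₁ (X j) + u j = i₂ (X j)) {a b r ℓ : ℕ}
    {f : MvPolynomial σ k} (h₁ : f ∈ differentialPower (RingHom.ker i₁) a)
    (h₂ : f ∈ differentialPower (RingHom.ker i₂) b) (hr : r < a + b)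
    (hℓ : idealOfVars σ k ^ ℓ ≤ RingHom.ker i₁ ⊔ RingHom.ker i₂) :
    aeval u (homogeneousComponent r f ^ ℓ) ∈ Ideal.span (Set.range u) ^ (r * ℓ + 1) := by
  let U := Ideal.span (Set.range u)
  have hmem : aeval u (homogeneousComponent r f) ∈ U ^ r * (U ⊔ (idealOfVars σ k).map i₁) := by
    rw [Ideal.mul_sup, sup_comm, mul_comm (U ^ r) (Ideal.map _ _), ← pow_succ]
    have hle : U ^ (a + b) ≤ U ^ (r + 1) := Ideal.pow_le_pow_right hr
    exact (sup_le_sup_left hle _ : _ ≤ _) (aeval_homogeneousComponent_mem hu h₁ h₂ r)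
  rw [map_pow, pow_succ, pow_mul]
  refine Ideal.mul_mono_right ?_ (mul_pow (U ^ r) _ ℓ ▸ Ideal.pow_mem_pow hmem ℓ)
  exact (sup_pow_le_sup_pow _ _ _).trans (sup_le le_rfl (map_pow_idealOfVars_le hu hℓ))

lemma length_le_of_mem_differentialPower [Finite σ] (hT : i₁.range ⊔ i₂.range = ⊤)
    {a b r ℓ N : ℕ} {f : MvPolynomial σ k} (h₁ : f ∈ differentialPower (RingHom.ker i₁) a)
    (h₂ : f ∈ differentialPower (RingHom.ker i₂) b) (hr : r < a + b)
    (hf : homogeneousComponent r f ≠ 0)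
    (hN₁ : idealOfVars σ k ^ N ≤ RingHom.ker i₁) (hN₂ : idealOfVars σ k ^ N ≤ RingHom.ker i₂)
    (hℓ : idealOfVars σ k ^ ℓ ≤ RingHom.ker i₁ ⊔ RingHom.ker i₂) :
    Module.length k T ≤ (Nat.card σ * (r * ℓ * (2 * N) ^ (Nat.card σ - 1)) : ℕ) *
      Module.length k (MvPolynomial σ k ⧸ idealOfVars σ k ^ ℓ) := by
  classical
  let := linearOrderOfSTO (α := σ) WellOrderingRel
  have : WellFoundedGT σ := Finite.to_wellFoundedGT
  let mo : MonomialOrder σ := MonomialOrder.lex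
  let u : σ → T := fun j ↦ i₂ (X j) - i₁ (X j)
  have hu (j : σ) : i₁ (X j) + u j = i₂ (X j) := add_sub_cancel _ _
  let g := homogeneousComponent r f ^ ℓ
  have hβ : IsUnit (g.coeff (mo.degree g)) :=
    isUnit_iff_ne_zero.2 (mo.coeff_degree_ne_zero_iff.2 (pow_ne_zero _ hf))
  have hlt (γ : σ →₀ ℕ) (hγ : mo.toSyn (mo.degree g) < mo.toSyn γ) :
      algebraMap k T (g.coeff γ) ∈ Ideal.span (Set.range u) := by
    rw [mo.coeff_eq_zero_of_lt hγ, map_zero]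
    exact zero_mem _
  calc Module.length k T = Module.length k (T ⧸ Ideal.span (Set.range u) ^ (2 * N)) :=
        ((Submodule.quotEquivOfEqBot _
          (span_range_pow_two_mul_eq_bot hu hN₁ hN₂)).restrictScalars k).length_eq.symm
    _ ≤ (Nat.card σ * (r * ℓ * (2 * N) ^ (Nat.card σ - 1)) : ℕ) *
        Module.length k (T ⧸ Ideal.span (Set.range u)) :=
      length_quotient_span_range_pow_le mo u ((homogeneousComponent_isHomogeneous r f).pow ℓ) hβ hlt
        (aeval_homogeneousComponent_pow_mem hu h₁ h₂ hr hℓ) _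
    _ ≤ _ := by
      gcongr
      refine length_quotient_le_of_surjective (surjective_mk_comp hu hT) fun g hg ↦ ?_
      refine Ideal.Quotient.eq_zero_iff_mem.2 (map_pow_idealOfVars_le hu hℓ ?_)
      exact Ideal.map_pow i₁ _ ℓ ▸ Ideal.mem_map_of_mem i₁ hg

lemma length_tensorProduct (V W : Type*) [AddCommGroup V] [Module k V] [AddCommGroup W]
    [Module k W] :
    Module.length k (TensorProduct k V W) = Module.length k V * Module.length k W := by
  simp only [Module.length_eq_rank, rank_tensorProduct, map_mul, Cardinal.toENat_lift]

open scoped TensorProduct in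
lemma range_includeLeft_comp_sup_range_includeRight_comp {S P Q : Type*} [CommRing S]
    [Algebra k S] [CommRing P] [Algebra k P] [CommRing Q] [Algebra k Q] {f₁ : S →ₐ[k] P}
    {f₂ : S →ₐ[k] Q} (hf₁ : Function.Surjective f₁) (hf₂ : Function.Surjective f₂) :
    ((Algebra.TensorProduct.includeLeft : P →ₐ[k] P ⊗[k] Q).comp f₁).range ⊔
      ((Algebra.TensorProduct.includeRight : Q →ₐ[k] P ⊗[k] Q).comp f₂).range = ⊤ := by
  rw [← Algebra.TensorProduct.map_range, AlgHom.range_eq_top]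
  exact TensorProduct.map_surjective hf₁ hf₂

lemma length_mul_length_le [Finite σ] {P Q : Type*} [CommRing P] [Algebra k P] [CommRing Q]
    [Algebra k Q] {f₁ : MvPolynomial σ k →ₐ[k] P} {f₂ : MvPolynomial σ k →ₐ[k] Q}
    (hf₁ : Function.Surjective f₁) (hf₂ : Function.Surjective f₂) {a b r ℓ N : ℕ}
    {f : MvPolynomial σ k} (h₁ : f ∈ differentialPower (RingHom.ker f₁) a)
    (h₂ : f ∈ differentialPower (RingHom.ker f₂) b) (hr : r < a + b)
    (hf : homogeneousComponent r f ≠ 0) (hN₁ : idealOfVars σ k ^ N ≤ RingHom.ker f₁)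
    (hN₂ : idealOfVars σ k ^ N ≤ RingHom.ker f₂)
    (hℓ : idealOfVars σ k ^ ℓ ≤ RingHom.ker f₁ ⊔ RingHom.ker f₂) :
    Module.length k P * Module.length k Q ≤
      (Nat.card σ * (r * ℓ * (2 * N) ^ (Nat.card σ - 1)) : ℕ) *
        Module.length k (MvPolynomial σ k ⧸ idealOfVars σ k ^ ℓ) := by
  let i₁ := (Algebra.TensorProduct.includeLeft : P →ₐ[k] TensorProduct k P Q).comp f₁
  let i₂ := (Algebra.TensorProduct.includeRight : Q →ₐ[k] TensorProduct k P Q).comp f₂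
  have hker₁ : RingHom.ker f₁ ≤ RingHom.ker i₁ := fun g hg ↦ by
    rw [RingHom.mem_ker, AlgHom.comp_apply, RingHom.mem_ker.1 hg, map_zero]
  have hker₂ : RingHom.ker f₂ ≤ RingHom.ker i₂ := fun g hg ↦ by
    rw [RingHom.mem_ker, AlgHom.comp_apply, RingHom.mem_ker.1 hg, map_zero]
  rw [← length_tensorProduct]
  exact length_le_of_mem_differentialPower
    (range_includeLeft_comp_sup_range_includeRight_comp hf₁ hf₂)
    (differentialPower_mono hker₁ a h₁) (differentialPower_mono hker₂ b h₂) hr hf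
    (hN₁.trans hker₁) (hN₂.trans hker₂) (hℓ.trans (sup_le_sup hker₁ hker₂))

lemma length_quotient_mul_length_quotient_le [Finite σ] {J₁ J₂ : Ideal (MvPolynomial σ k)}
    {a b r ℓ N : ℕ} {f : MvPolynomial σ k} (h₁ : f ∈ differentialPower J₁ a)
    (h₂ : f ∈ differentialPower J₂ b) (hr : r < a + b) (hf : homogeneousComponent r f ≠ 0)
    (hN₁ : idealOfVars σ k ^ N ≤ J₁) (hN₂ : idealOfVars σ k ^ N ≤ J₂)
    (hℓ : idealOfVars σ k ^ ℓ ≤ J₁ ⊔ J₂) :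
    Module.length k (MvPolynomial σ k ⧸ J₁) * Module.length k (MvPolynomial σ k ⧸ J₂) ≤
      (Nat.card σ * (r * ℓ * (2 * N) ^ (Nat.card σ - 1)) : ℕ) *
        Module.length k (MvPolynomial σ k ⧸ idealOfVars σ k ^ ℓ) := by
  have hker (J : Ideal (MvPolynomial σ k)) : RingHom.ker (Ideal.Quotient.mkₐ k J) = J :=
    Ideal.Quotient.mkₐ_ker k J
  rw [← hker J₁] at h₁ hN₁
  rw [← hker J₂] at h₂ hN₂
  rw [← hker J₁, ← hker J₂] at hℓ
  exact length_mul_length_le (Ideal.Quotient.mkₐ_surjective k J₁)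
    (Ideal.Quotient.mkₐ_surjective k J₂) h₁ h₂ hr hf hN₁ hN₂ hℓ

lemma length_quotient_pow_idealOfVars_ne_top [Finite σ] (ℓ : ℕ) :
    Module.length k (MvPolynomial σ k ⧸ idealOfVars σ k ^ ℓ) ≠ ⊤ := by
  let I := idealOfVars σ k ^ ℓ
  have : Finite {w : σ →₀ ℕ // w.degree < ℓ} := Finsupp.finite_of_degree_lt ℓ
  let coeffs : MvPolynomial σ k →ₗ[k] ({w : σ →₀ ℕ // w.degree < ℓ} → k) :=
    LinearMap.pi fun w ↦ lcoeff k w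
  have hker : LinearMap.ker coeffs = I.restrictScalars k := by
    ext f
    simp [I, coeffs, mem_pow_idealOfVars_iff', funext_iff]
  have : Module.Finite k (MvPolynomial σ k ⧸ I) := Module.Finite.equiv <|
    coeffs.quotKerEquivRange.symm.trans <|
      (Submodule.quotEquivOfEq _ _ hker).trans (Submodule.Quotient.restrictScalarsEquiv k I)
  exact Module.length_ne_top

lemma length_le_length_quotient_ker {k S R Q : Type*} [Field k] [CommRing S] [Algebra k S]
    [CommRing R] [CommRing Q] [Algebra R Q] (hRQ : Function.Surjective (algebraMap R Q))
    {ψ : S →+* Q} (hψ : Function.Surjective ψ) :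
    Module.length R Q ≤ Module.length k (S ⧸ RingHom.ker ψ) := by
  algebraize [ψ]
  let e : (S ⧸ RingHom.ker ψ) ≃ₗ[S] Q :=
    (Algebra.linearMap S Q).quotKerEquivOfSurjective hψ
  calc Module.length R Q = Module.length S Q := by
        rw [Module.length_eq_of_surjective (R := Q) hRQ, Module.length_eq_of_surjective (R := Q) hψ]
    _ = Module.length S (S ⧸ RingHom.ker ψ) := e.length_eq.symm
    _ ≤ Module.length k (S ⧸ RingHom.ker ψ) := by
      rw [← Module.length_top (R := S), ← Module.length_top (R := k)]
      exact Submodule.length_le_length_restrictScalars k (⊤ : Submodule S (S ⧸ RingHom.ker ψ))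

end LengthBound

section Dimension

open MvPolynomial IsLocalRing

lemma ker_factor_comp {R S : Type*} [CommRing R] [CommRing S] {L J : Ideal R} (hLJ : L ≤ J)
    (Φ : S →+* R ⧸ L) :
    RingHom.ker ((Ideal.Quotient.factor hLJ).comp Φ) =
      (J.map (Ideal.Quotient.mk L)).comap Φ := by
  rw [← RingHom.comap_ker, Ideal.Quotient.factor_ker]

lemma exists_natCast_add_eq_of_le_add {n : ℕ} {x y : WithBot ℕ∞} (h : n ≤ x + y) :
    ∃ d e : ℕ, d + e = n ∧ d ≤ x ∧ e ≤ y := by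
  induction x with
  | bot => simp at h
  | coe x =>
  induction y with
  | bot => simp at h
  | coe y =>
  have h' : (n : ℕ∞) ≤ x + y := by exact_mod_cast h
  induction x with
  | top => exact ⟨n, 0, by simp⟩
  | coe x =>
  induction y with
  | top => exact ⟨0, n, by simp⟩
  | coe y =>
  have h'' : n ≤ x + y := by exact_mod_cast h'
  refine ⟨min n x, n - min n x, by omega, ?_, ?_⟩
  · exact_mod_cast min_le_right n x
  · have : n - min n x ≤ y := by omega
    exact WithBot.coe_le_coe.2 (Nat.cast_le.2 this)

lemma comap_sup_of_surjective {R S : Type*} [CommRing R] [CommRing S] {f : R →+* S}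
    (hf : Function.Surjective f) (I J : Ideal S) :
    (I ⊔ J).comap f = I.comap f ⊔ J.comap f := by
  rw [← Ideal.map_sup_comap_of_surjective f hf, Ideal.comap_map_of_surjective' f hf,
    sup_eq_left]
  exact (Ideal.comap_mono bot_le).trans le_sup_left

variable {R : Type*} [CommRing R]

section Truncated

variable {σ k : Type*} [Field k] {m : Ideal R} {M : ℕ} {Φ : MvPolynomial σ k →+* R ⧸ m ^ M}

lemma pow_idealOfVars_le_comap
    (hmap : (idealOfVars σ k).map Φ = m.map (Ideal.Quotient.mk (m ^ M))) {N : ℕ} {J : Ideal R}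
    (hJ : m ^ N ≤ J) : idealOfVars σ k ^ N ≤ (J.map (Ideal.Quotient.mk (m ^ M))).comap Φ := by
  rw [← Ideal.map_le_iff_le_comap, Ideal.map_pow, hmap, ← Ideal.map_pow]
  exact Ideal.map_mono hJ

lemma exists_homogeneousComponent_ne_zero
    (hmap : (idealOfVars σ k).map Φ = m.map (Ideal.Quotient.mk (m ^ M))) {d : ℕ} (hd : d ≤ M)
    {f : R} (hf : f ∉ m ^ d) {F : MvPolynomial σ k} (hF : Φ F = Ideal.Quotient.mk (m ^ M) f) :
    ∃ r < d, homogeneousComponent r F ≠ 0 := by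
  classical
  by_contra! h
  have hFd : F ∈ idealOfVars σ k ^ d := mem_pow_idealOfVars_iff' _ _ |>.2 fun w hw ↦ by
    simpa [coeff_homogeneousComponent] using congrArg (coeff w) (h w.degree hw)
  have hΦF := pow_idealOfVars_le_comap hmap le_rfl hFd
  rw [Ideal.mem_comap, hF, Ideal.mem_quotient_iff_mem (Ideal.pow_le_pow_right hd)] at hΦF
  exact hf hΦF

lemma length_quotient_le_length_quotient_comap (hΦ : Function.Surjective Φ) {J : Ideal R}
    (hJ : m ^ M ≤ J) :
    Module.length R (R ⧸ J) ≤
      Module.length k (MvPolynomial σ k ⧸ (J.map (Ideal.Quotient.mk (m ^ M))).comap Φ) := by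
  rw [← ker_factor_comp hJ]
  exact length_le_length_quotient_ker Ideal.Quotient.mk_surjective
    ((Ideal.Quotient.factor_surjective hJ).comp hΦ)

end Truncated

variable [IsLocalRing R] {σ : Type*} [Finite σ] {I J : Ideal R}

lemma length_mul_length_le_of_mul_mem (K : Type*) [Field K] [Algebra K R] [IsNoetherianRing R]
    {x : σ → R} (hx : Ideal.span (Set.range x) = maximalIdeal R)
    (hdim : Nat.card σ ≤ ringKrullDim R) {s t f : R} {a b c₁ c₂ ℓ : ℕ}
    (hs : ∀ N y, s * y ∈ I ⊔ maximalIdeal R ^ N → y ∈ I ⊔ maximalIdeal R ^ (N - c₁))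
    (ht : ∀ N y, t * y ∈ J ⊔ maximalIdeal R ^ N → y ∈ J ⊔ maximalIdeal R ^ (N - c₂))
    (hsf : s * f ∈ I ^ a) (htf : t * f ∈ J ^ b) (hf : f ∉ maximalIdeal R ^ (a + b))
    (hℓ : maximalIdeal R ^ ℓ ≤ I ⊔ J) (N : ℕ) :
    Module.length R (R ⧸ (I ⊔ maximalIdeal R ^ N)) *
        Module.length R (R ⧸ (J ⊔ maximalIdeal R ^ N)) ≤
      (Nat.card σ * ((a + b) * ℓ * (2 * N) ^ (Nat.card σ - 1)) : ℕ) *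
        Module.length (ResidueField R)
          (MvPolynomial σ (ResidueField R) ⧸ idealOfVars σ (ResidueField R) ^ ℓ) := by
  let M := N + a * c₁ + b * c₂ + a + b + 1
  have hNM {L : Ideal R} : maximalIdeal R ^ M ≤ L ⊔ maximalIdeal R ^ N :=
    (Ideal.pow_le_pow_right (by omega)).trans le_sup_right
  obtain ⟨Φ, hΦ, hker, hmap⟩ :=
    exists_surjective_ker_le_pow_idealOfVars K hx hdim (M := M) (by omega)
  obtain ⟨F, hF⟩ := hΦ (Ideal.Quotient.mk _ f)
  have hF₁ := mem_differentialPower_comap hΦ hker hmap hs (N := N) (by omega) hsf hF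
  have hF₂ := mem_differentialPower_comap hΦ hker hmap ht (N := N) (by omega) htf hF
  obtain ⟨r, hr, hFr⟩ := exists_homogeneousComponent_ne_zero hmap (by omega) hf hF
  have hℓ' := pow_idealOfVars_le_comap hmap <|
    hℓ.trans (sup_le_sup (le_sup_left (b := maximalIdeal R ^ N))
      (le_sup_left (b := maximalIdeal R ^ N)))
  rw [Ideal.map_sup, comap_sup_of_surjective hΦ] at hℓ'
  calc _ ≤ _ := mul_le_mul' (length_quotient_le_length_quotient_comap hΦ hNM)
        (length_quotient_le_length_quotient_comap hΦ hNM)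
    _ ≤ (Nat.card σ * (r * ℓ * (2 * N) ^ (Nat.card σ - 1)) : ℕ) * _ :=
      length_quotient_mul_length_quotient_le hF₁ hF₂ hr hFr
        (pow_idealOfVars_le_comap hmap le_sup_right) (pow_idealOfVars_le_comap hmap le_sup_right)
        hℓ'
    _ ≤ _ := by gcongr

lemma exists_length_mul_length_le (K : Type*) [Field K] [Algebra K R] [IsNoetherianRing R]
    {x : σ → R} (hx : Ideal.span (Set.range x) = maximalIdeal R)
    (hdim : Nat.card σ ≤ ringKrullDim R) (hrad : maximalIdeal R ≤ (I ⊔ J).radical)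
    {s t f : R} {a b : ℕ} (hs : IsSMulRegular (R ⧸ I) s) (ht : IsSMulRegular (R ⧸ J) t)
    (hsf : s * f ∈ I ^ a) (htf : t * f ∈ J ^ b) (hf : f ∉ maximalIdeal R ^ (a + b)) :
    ∃ E : ℕ, ∀ N : ℕ, Module.length R (R ⧸ (I ⊔ maximalIdeal R ^ N)) *
        Module.length R (R ⧸ (J ⊔ maximalIdeal R ^ N)) ≤
      (E * (Nat.card σ * (2 * N) ^ (Nat.card σ - 1)) : ℕ) := by
  obtain ⟨c₁, hc₁⟩ := exists_mem_sup_pow_of_mul_mem (maximalIdeal R) hs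
  obtain ⟨c₂, hc₂⟩ := exists_mem_sup_pow_of_mul_mem (maximalIdeal R) ht
  obtain ⟨ℓ, hℓ⟩ :=
    Ideal.exists_pow_le_of_le_radical_of_fg hrad (maximalIdeal R).fg_of_isNoetherianRing
  obtain ⟨L, hL⟩ := ENat.ne_top_iff_exists.1
    (length_quotient_pow_idealOfVars_ne_top (σ := σ) (k := ResidueField R) ℓ)
  refine ⟨(a + b) * ℓ * L, fun N ↦
    (length_mul_length_le_of_mul_mem K hx hdim hc₁ hc₂ hsf htf hf hℓ N).trans_eq ?_⟩
  rw [← hL, ← Nat.cast_mul]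
  congr 1
  ring

theorem ringKrullDim_quotient_add_lt [IsNoetherianRing R] {E n : ℕ}
    (h : ∀ N : ℕ, Module.length R (R ⧸ (I ⊔ maximalIdeal R ^ N)) *
        Module.length R (R ⧸ (J ⊔ maximalIdeal R ^ N)) ≤ (E * (n * (2 * N) ^ (n - 1)) : ℕ)) :
    ringKrullDim (R ⧸ I) + ringKrullDim (R ⧸ J) < n := by
  by_contra! hn
  obtain ⟨d, e, rfl, hd, he⟩ := exists_natCast_add_eq_of_le_add hn
  obtain ⟨C₁, hC₁⟩ := exists_pow_le_mul_length hd
  obtain ⟨C₂, hC₂⟩ := exists_pow_le_mul_length he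
  let C := C₁ + C₂
  obtain ⟨t, ht⟩ := exists_mul_pow_lt_pow (C₁ * C₂ * E) (2 * C) (2 * C) (d + e)
  have hmono {L : Ideal R} {C' : ℕ} (hC' : C' ≤ C) :
      Module.length R (R ⧸ (L ⊔ maximalIdeal R ^ (C' * t + C'))) ≤
        Module.length R (R ⧸ (L ⊔ maximalIdeal R ^ (C * t + C))) :=
    length_quotient_anti R (sup_le_sup_left (Ideal.pow_le_pow_right (by gcongr)) L)
  refine ht.not_ge (Nat.cast_le (α := ℕ∞).1 ?_)
  calc ((t ^ (d + e) : ℕ) : ℕ∞) = (t ^ d : ℕ) * (t ^ e : ℕ) := by rw [pow_add, Nat.cast_mul]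
    _ ≤ _ := mul_le_mul' ((hC₁ t).trans (mul_le_mul_right (hmono (by omega)) _))
        ((hC₂ t).trans (mul_le_mul_right (hmono (by omega)) _))
    _ = C₁ * C₂ * _ := mul_mul_mul_comm _ _ _ _
    _ ≤ C₁ * C₂ * _ := mul_le_mul_right (h (C * t + C)) _
    _ = _ := by
      push_cast
      ring

end Dimension

lemma exists_mul_mem_pow_of_mem_symbolicPower {R : Type*} [CommRing R] {P : Ideal R} [P.IsPrime]
    {n : ℕ} {f : R} (hf : f ∈ symbolicPower P n) : ∃ s ∉ P, s * f ∈ P ^ n :=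
  (IsLocalization.algebraMap_mem_map_algebraMap_iff P.primeCompl _ _ _).1 hf

theorem symbolicPower_inf_symbolicPower_le_pow_maximalIdeal_general {K R : Type*} [Field K]
    [CommRing R] [IsLocalRing R] [Algebra K R] (hreg : IsRegularLocal R) {I J : Ideal R}
    (hrad : IsLocalRing.maximalIdeal R ≤ (I ⊔ J).radical)
    (hdim : ringKrullDim R ≤ ringKrullDim (R ⧸ I) + ringKrullDim (R ⧸ J)) {s t f : R} {a b : ℕ}
    (hs : IsSMulRegular (R ⧸ I) s) (ht : IsSMulRegular (R ⧸ J) t)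
    (hsf : s * f ∈ I ^ a) (htf : t * f ∈ J ^ b) : f ∈ IsLocalRing.maximalIdeal R ^ (a + b) := by
  obtain ⟨_, X, hX, hXdim⟩ := hreg
  have hcard : (Nat.card X : WithBot ℕ∞) = ringKrullDim R := by
    rwa [Nat.card_eq_fintype_card, Fintype.card_coe]
  by_contra hf
  obtain ⟨E, hE⟩ := exists_length_mul_length_le K (x := ((↑) : X → R))
    (by rwa [Subtype.range_coe]) hcard.le hrad hs ht hsf htf hf
  exact (ringKrullDim_quotient_add_lt hE).not_ge (hcard.trans_le hdim)

/-- **Sather-Wagstaff**: let `(R, 𝔪)` be a regular local ring containing a field, and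
`𝔭, 𝔮` primes with `√(𝔭 + 𝔮) = 𝔪` and `dim R/𝔭 + dim R/𝔮 = dim R`. Then for all
positive integers `a`, `b` one has `𝔭^{(a)} ∩ 𝔮^{(b)} ⊆ 𝔪^{a+b}`. -/
theorem symbolicPower_inf_symbolicPower_le_pow_maximalIdeal {K R : Type*} [Field K]
    [CommRing R] [IsLocalRing R] [Algebra K R] (hreg : IsRegularLocal R)
    (p q : Ideal R) [p.IsPrime] [q.IsPrime]
    (hrad : (p ⊔ q).radical = IsLocalRing.maximalIdeal R)
    (hdim : ringKrullDim (R ⧸ p) + ringKrullDim (R ⧸ q) = ringKrullDim R)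
    (a b : ℕ) (ha : 0 < a) (hb : 0 < b) :
    symbolicPower p a ⊓ symbolicPower q b ≤ IsLocalRing.maximalIdeal R ^ (a + b) := by
  rintro f ⟨hfp, hfq⟩
  obtain ⟨s, hs, hsf⟩ := exists_mul_mem_pow_of_mem_symbolicPower hfp
  obtain ⟨t, ht, htf⟩ := exists_mul_mem_pow_of_mem_symbolicPower hfq
  exact symbolicPower_inf_symbolicPower_le_pow_maximalIdeal_general (K := K) hreg hrad.ge hdim.ge
    (isSMulRegular_quotient_of_notMem hs) (isSMulRegular_quotient_of_notMem ht) hsf htf
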